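/- Let K be a normal Hopf subalgebra of H and M a finite-dimensional left K-module. Then: (1) the restriction to K of the induced module satisfies M↑_K^H ↓_K^H ≅ ⊕_{C ∈ H/K} {}^C M as K-modules, where the sum runs over representatives C of the right cosets of K in H; (2) M↑_K^H is an irreducible H-module if and only if M is an irreducible K-module which is not a direct summand of any conjugate module {}^C M for any simple subcoalgebra C of H with C ⊄ K. -/

import Mathlib

/-
By Radford's formula some power of `S²` is the identity, so on each simple factor of `H` which it
preserves `S²` is conjugation by a matrix whose eigenvalues are roots of unity, and its trace there
is of the form `|∑ μᵢ|²`. The factor given by the counit contributes `1`, hence `Tr(S²) ≠ 0`, and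
the right integral `h ↦ Tr(x ↦ S²(x) h)` on `H` can be normalized to a functional `haar` with
`haar 1 = 1`. For the form `(x, y) ↦ haar (S(x) y)` a subcoalgebra is complementary to its
orthogonal, which is again a subcoalgebra, and disjoint subcoalgebras are orthogonal. Therefore `H`
is the direct sum of the right cosets `CK`, with projections which are right `K`-linear, and also
left `K`-linear for normal `K`; tensoring with `M` decomposes `M↑` into the `ᶜM`.

When `M↑` is simple, a `K`-map `M → ᶜM` with `C ⊄ K` extends by Frobenius reciprocity to an
endomorphism of `M↑`, a scalar by Schur's lemma, and the scalar is zero because the projection of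
`M↑` onto `M` kills `ᶜM`. Conversely, if all such maps vanish, then every idempotent endomorphism
of `M↑` maps `1 ⊗ M` to itself, hence is induced by an idempotent endomorphism of the simple
module `M`, and the semisimple module `M↑` has no proper nonzero summand.
-/

open TensorProduct

namespace MackeyPaper

noncomputable section

universe v

variable (k : Type) [Field k] [CharZero k] [IsAlgClosed k]
variable (H : Type) [Ring H] [HopfAlgebra k H]

/-- A subcoalgebra of `H`: a `k`-subspace `C` with `Δ(C) ⊆ C ⊗ C`. -/
def IsSubcoalgebra (C : Submodule k H) : Prop :=
  ∀ c ∈ C, Coalgebra.comul (R := k) c ∈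
    LinearMap.range (TensorProduct.map C.subtype C.subtype)

/-- A simple (nonzero, minimal) subcoalgebra of `H`. -/
def IsSimpleSubcoalgebra (C : Submodule k H) : Prop :=
  IsSubcoalgebra k H C ∧ C ≠ ⊥ ∧
    ∀ D : Submodule k H, D ≤ C → IsSubcoalgebra k H D → D ≠ ⊥ → D = C

/-- A Hopf subalgebra of `H`: a subalgebra which is a subcoalgebra and is
stable under the antipode. -/
def IsHopfSubalgebra (K : Subalgebra k H) : Prop :=
  IsSubcoalgebra k H K.toSubmodule ∧ ∀ x ∈ K, HopfAlgebra.antipode (R := k) x ∈ K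

/-- `Λ` is the (two-sided) idempotent integral of the Hopf subalgebra `K`,
i.e. the integral normalized by `ε(Λ) = 1`. -/
def IsIdempotentIntegral (K : Subalgebra k H) (Λ : H) : Prop :=
  Λ ∈ K ∧ Coalgebra.counit (R := k) Λ = 1 ∧
    ∀ x ∈ K, x * Λ = Coalgebra.counit (R := k) x • Λ ∧
      Λ * x = Coalgebra.counit (R := k) x • Λ

/-- A cocommutative element of `H`; the cocommutative elements of `H` form
the character ring `C(H^*)`. -/
def IsCocomm (x : H) : Prop :=
  (TensorProduct.comm k H H) (Coalgebra.comul (R := k) x) = Coalgebra.comul (R := k) x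

/-- The character ring `C(H^*)`, i.e. the space of cocommutative elements of `H`,
as a `k`-subspace of `H`. -/
def charRing : Submodule k H :=
  LinearMap.ker ((TensorProduct.comm k H H).toLinearMap ∘ₗ Coalgebra.comul (R := k)
      - Coalgebra.comul (R := k))

/-- `d` is the irreducible character (of `H^*`) associated to the simple
subcoalgebra `C`: the unique cocommutative element of `C` whose counit is the
positive square root of `dim_k C`. -/
def IsCharacterOf (d : H) (C : Submodule k H) : Prop :=
  d ∈ C ∧ IsCocomm k H d ∧
    Coalgebra.counit (R := k) d = ((Nat.sqrt (Module.finrank k ↥C) : ℕ) : k)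

/-- The right coset `CK` of a subcoalgebra `C`, i.e. the subspace `C·K`. -/
def CKsub (K : Subalgebra k H) (C : Submodule k H) : Submodule k H :=
  C * K.toSubmodule

/-- The conjugate Hopf subalgebra `ᶜK` of `K` by a simple subcoalgebra `C`
(with associated irreducible character `c`): the span of all simple
subcoalgebras of `H` whose irreducible character `d` satisfies
`d·c·Λ_K = ε(d)·c·Λ_K`.  (The condition is stated for all cocommutative
elements of `C` resp. `D`; this is equivalent, since the cocommutative
elements of a simple subcoalgebra are exactly the scalar multiples of its
irreducible character.) -/
def conjK (K : Subalgebra k H) (Λ : H) (C : Submodule k H) : Submodule k H :=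
  sSup {D : Submodule k H | IsSimpleSubcoalgebra k H D ∧
    ∀ d ∈ D, IsCocomm k H d → ∀ c ∈ C, IsCocomm k H c →
      d * (c * Λ) = Coalgebra.counit (R := k) d • (c * Λ)}

/-- A complete irredundant system of representatives (by simple subcoalgebras)
of the double cosets `L\H/K`.  (Taking `L = ⊥` gives a system of
representatives of the right cosets `H/K`.) -/
def IsDoubleCosetReps (L K : Subalgebra k H) {ι : Type} (rep : ι → Submodule k H) : Prop :=
  (∀ i, IsSimpleSubcoalgebra k H (rep i)) ∧
  (∀ i j, L.toSubmodule * rep i * K.toSubmodule = L.toSubmodule * rep j * K.toSubmodule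
      → i = j) ∧
  (∀ C : Submodule k H, IsSimpleSubcoalgebra k H C →
      ∃ i, C ≤ L.toSubmodule * rep i * K.toSubmodule)

section Ind

variable (K : Subalgebra k H) (M : Type v) [AddCommGroup M] [Module k M]
  [Module ↥K M] [IsScalarTower k ↥K M]

/-- The relations defining the induced module `H ⊗_K M` as a quotient of
`H ⊗_k M`: the `H`-submodule generated by the elements `a ⊗ m - 1 ⊗ a·m`
for `a ∈ K` (equivalently, spanned by all `h·a ⊗ m - h ⊗ a·m`). -/
def indRel : Submodule H (H ⊗[k] M) :=
  Submodule.span H {z | ∃ (a : ↥K) (m : M),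
    z = (a : H) ⊗ₜ[k] m - (1 : H) ⊗ₜ[k] (a • m)}

/-- The induced module `M↑_K^H = H ⊗_K M`, a left `H`-module. -/
abbrev Ind := (H ⊗[k] M) ⧸ indRel k H K M

variable (C : Submodule k H)

/-- The underlying space `CK ⊗_k M` of which the conjugate module `ᶜM` is a
quotient. -/
def CKM : Type _ := ↥(CKsub k H K C) ⊗[k] M

instance : AddCommGroup (CKM k H K M C) :=
  inferInstanceAs (AddCommGroup (↥(CKsub k H K C) ⊗[k] M))

instance : Module k (CKM k H K M C) :=
  inferInstanceAs (Module k (↥(CKsub k H K C) ⊗[k] M))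

/-- The pure tensor `x ⊗ m` as an element of `CK ⊗_k M`. -/
def ckmk (x : ↥(CKsub k H K C)) (m : M) : CKM k H K M C := x ⊗ₜ[k] m

/-- The relations defining the conjugate module `ᶜM = CK ⊗_K M` as a quotient
of `CK ⊗_k M`: `x·a ⊗ m - x ⊗ a·m` for `a ∈ K`. -/
def conjRel : Submodule k (CKM k H K M C) :=
  Submodule.span k {z | ∃ (x : ↥(CKsub k H K C)) (a : ↥K) (m : M)
    (hxa : (x : H) * (a : H) ∈ CKsub k H K C),
    z = ckmk k H K M C ⟨(x : H) * (a : H), hxa⟩ m - ckmk k H K M C x (a • m)}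

/-- The conjugate module `ᶜM := CK ⊗_K M`. -/
abbrev ConjM := CKM k H K M C ⧸ conjRel k H K M C

/-- The canonical copy of the conjugate module `ᶜM = CK ⊗_K M` inside
`H ⊗_K M` (the image of `CK ⊗_K M` under multiplication; this is indeed a
copy of `ᶜM` since `H` is a free right `K`-module and `CK` is one of the
coset summands). -/
def conjMsub : Submodule k (Ind k H K M) :=
  Submodule.span k {z | ∃ (x : H) (_ : x ∈ CKsub k H K C) (m : M),
    z = Submodule.Quotient.mk (x ⊗ₜ[k] m)}

end Ind

section Comp

variable (L K : Subalgebra k H) (Λ : H) (C : Submodule k H)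
variable (M : Type v) [AddCommGroup M] [Module k M] [Module ↥K M] [IsScalarTower k ↥K M]

/-- The underlying space `L ⊗_k (CK ⊗_k M)`. -/
def LCM : Type _ := ↥L ⊗[k] CKM k H K M C

instance : AddCommGroup (LCM k H L K C M) :=
  inferInstanceAs (AddCommGroup (↥L ⊗[k] CKM k H K M C))

instance : Module k (LCM k H L K C M) :=
  inferInstanceAs (Module k (↥L ⊗[k] CKM k H K M C))

/-- The pure tensor `l ⊗ w` as an element of `L ⊗_k (CK ⊗_k M)`. -/
def lcmk (l : ↥L) (w : CKM k H K M C) : LCM k H L K C M := l ⊗ₜ[k] w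

/-- The relations defining `L ⊗_{L ∩ ᶜK} ᶜM` as a quotient of
`L ⊗_k (CK ⊗_k M)`: the balancedness relations over `L ∩ ᶜK` (first set),
together with (the image of) the relations defining `ᶜM = CK ⊗_K M`
(second set). -/
def compRel : Submodule k (LCM k H L K C M) :=
  Submodule.span k
    ({z | ∃ (l : ↥L) (a : H) (haL : a ∈ L) (_ : a ∈ conjK k H K Λ C)
        (x : ↥(CKsub k H K C)) (m : M) (hax : a * (x : H) ∈ CKsub k H K C),
        z = lcmk k H L K C M ⟨(l : H) * a, mul_mem l.2 haL⟩ (ckmk k H K M C x m)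
          - lcmk k H L K C M l (ckmk k H K M C ⟨a * (x : H), hax⟩ m)} ∪
     {z | ∃ (l : ↥L) (x : ↥(CKsub k H K C)) (a : ↥K) (m : M)
        (hxa : (x : H) * (a : H) ∈ CKsub k H K C),
        z = lcmk k H L K C M l (ckmk k H K M C ⟨(x : H) * (a : H), hxa⟩ m)
          - lcmk k H L K C M l (ckmk k H K M C x (a • m))})

/-- The module `L ⊗_{L ∩ ᶜK} ᶜM` (a left `L`-module via multiplication on the
first tensor factor). -/
abbrev Comp := LCM k H L K C M ⧸ compRel k H L K Λ C M

end Comp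

open DirectSum

section Mackey

variable (L K : Subalgebra k H) (Λ : H)

/-- The Mackey isomorphism property for the pair `(L, K)` at the `K`-module
`M`: for any system of double coset representatives, the left-multiplication
map `⊕_C L ⊗_{L ∩ ᶜK} ᶜM → M↑_K^H↓_L^H`, `l ⊗ v ↦ l·v`, is an isomorphism of
`L`-modules.  (A `k`-linear map satisfying the displayed formula on the
spanning elements is automatically `L`-equivariant for the evident
`L`-actions, so this property is stated for `k`-linear maps.) -/
def MackeyAt (M : Type v) [AddCommGroup M] [Module k M] [Module ↥K M]
    [IsScalarTower k ↥K M] [Module.Finite k M] : Prop :=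
  ∀ (ι : Type) [DecidableEq ι] (rep : ι → Submodule k H),
    IsDoubleCosetReps k H L K rep →
    ∃ π : (⨁ i : ι, Comp k H L K Λ (rep i) M) →ₗ[k] Ind k H K M,
      Function.Bijective π ∧
      ∀ (i : ι) (l : ↥L) (x : ↥(CKsub k H K (rep i))) (m : M),
        π (DirectSum.of (fun i => Comp k H L K Λ (rep i) M) i
            (Submodule.Quotient.mk (lcmk k H L K (rep i) M l (ckmk k H K M (rep i) x m)))) =
          Submodule.Quotient.mk (((l : H) * (x : H)) ⊗ₜ[k] m)

/-- `(L, K)` is a Mackey pair of Hopf subalgebras of `H` (here `Λ` is the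
idempotent integral of `K`): for every finite-dimensional `K`-module `M` the
left-multiplication homomorphism `π_M` is an isomorphism. -/
def IsMackeyPair : Prop :=
  ∀ (M : Type v) [AddCommGroup M] [Module k M] [Module ↥K M]
    [IsScalarTower k ↥K M] [Module.Finite k M], MackeyAt k H L K Λ M

end Mackey


section Statements

/-- The left adjoint action `h ⊗ x ↦ ∑ h₁ x S(h₂)` of `H` on itself, as a
linear map. -/
def adActL : H →ₗ[k] H →ₗ[k] H :=
  (TensorProduct.lift
    (LinearMap.mk₂ k
      (fun a b => (LinearMap.mulRight k (HopfAlgebra.antipode (R := k) b)).comp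
        (LinearMap.mulLeft k a))
      (fun a a' b => by ext x; simp [add_mul])
      (fun c a b => by ext x; simp [smul_mul_assoc])
      (fun a b b' => by ext x; simp [mul_add])
      (fun c a b => by ext x; simp [mul_smul_comm]))) ∘ₗ
    Coalgebra.comul (R := k)

/-- The right adjoint action `h ⊗ x ↦ ∑ S(h₁) x h₂` of `H` on itself, as a
linear map. -/
def adActR : H →ₗ[k] H →ₗ[k] H :=
  (TensorProduct.lift
    (LinearMap.mk₂ k
      (fun a b => (LinearMap.mulRight k b).comp
        (LinearMap.mulLeft k (HopfAlgebra.antipode (R := k) a)))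
      (fun a a' b => by ext x; simp [add_mul])
      (fun c a b => by ext x; simp [smul_mul_assoc])
      (fun a b b' => by ext x; simp [mul_add])
      (fun c a b => by ext x; simp [mul_smul_comm]))) ∘ₗ
    Coalgebra.comul (R := k)

/-- A normal Hopf subalgebra of `H`: a Hopf subalgebra stable under both the
left and the right adjoint action of `H` on itself. -/
def IsNormalHopfSubalgebra (K : Subalgebra k H) : Prop :=
  IsHopfSubalgebra k H K ∧
    ∀ h : H, ∀ x ∈ K, adActL k H h x ∈ K ∧ adActR k H h x ∈ K

end Statements

end

section Sweedler

open Coalgebra HopfAlgebra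

variable {R A ι : Type*} [CommSemiring R]

theorem sum_counit_right_smul [AddCommMonoid A] [Module R A] [Coalgebra R A] {x : A}
    (r : Repr R x ι) : ∑ i ∈ r.index, counit (R := R) (r.right i) • r.left i = x := by
  simpa only [map_sum, TensorProduct.rid_tmul, one_smul] using
    congrArg (TensorProduct.rid R A) (sum_tmul_counit_eq r)

variable [Semiring A] [HopfAlgebra R A]

theorem sum_comul_mul_one_tmul_antipode {x : A} (r : Repr R x ι) :
    ∑ i ∈ r.index, comul (R := R) (r.left i) * (1 ⊗ₜ[R] antipode R (r.right i)) = x ⊗ₜ[R] 1 := by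
  have coassoc := congrArg
    (LinearMap.lTensor A (LinearMap.mul' R A ∘ₗ LinearMap.lTensor A (antipode R)))
    (sum_tmul_tmul_eq r (fun i => ℛ R (r.left i)) (fun i => ℛ R (r.right i)))
  simp only [map_sum, LinearMap.lTensor_tmul, LinearMap.comp_apply, LinearMap.mul'_apply,
    ← tmul_sum, sum_mul_antipode_eq_smul, tmul_smul] at coassoc
  simp only [← (ℛ R (r.left _)).eq, Finset.sum_mul, Algebra.TensorProduct.tmul_mul_tmul, mul_one]
  rw [coassoc]
  simp only [smul_tmul', ← sum_tmul, sum_counit_right_smul]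

theorem sum_antipode_tmul_one_mul_comul {x : A} (r : Repr R x ι) :
    ∑ i ∈ r.index, (antipode R (r.left i) ⊗ₜ[R] 1) * comul (R := R) (r.right i) = 1 ⊗ₜ[R] x := by
  have coassoc := congrArg
    (LinearMap.rTensor A (LinearMap.mul' R A ∘ₗ LinearMap.rTensor A (antipode R)) ∘ₗ
      (TensorProduct.assoc R A A A).symm.toLinearMap)
    (sum_tmul_tmul_eq r (fun i => ℛ R (r.left i)) (fun i => ℛ R (r.right i)))
  simp only [map_sum, LinearMap.rTensor_tmul, LinearMap.comp_apply, LinearMap.mul'_apply,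
    LinearEquiv.coe_coe, TensorProduct.assoc_symm_tmul, ← sum_tmul, sum_antipode_mul_eq_smul]
    at coassoc
  simp only [← (ℛ R (r.right _)).eq, Finset.mul_sum, Algebra.TensorProduct.tmul_mul_tmul, one_mul]
  rw [← coassoc]
  simp only [smul_tmul, ← tmul_sum, sum_counit_smul]

theorem sum_tmul_one_mul_rTensor_antipode_comul {x : A} (r : Repr R x ι) :
    ∑ i ∈ r.index, (r.left i ⊗ₜ[R] 1) * LinearMap.rTensor A (antipode R) (comul (r.right i)) =
      1 ⊗ₜ[R] x := by
  have coassoc := congrArg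
    (LinearMap.rTensor A (LinearMap.mul' R A ∘ₗ LinearMap.lTensor A (antipode R)) ∘ₗ
      (TensorProduct.assoc R A A A).symm.toLinearMap)
    (sum_tmul_tmul_eq r (fun i => ℛ R (r.left i)) (fun i => ℛ R (r.right i)))
  simp only [map_sum, LinearMap.rTensor_tmul, LinearMap.lTensor_tmul, LinearMap.comp_apply,
    LinearMap.mul'_apply, LinearEquiv.coe_coe, TensorProduct.assoc_symm_tmul, ← sum_tmul,
    sum_mul_antipode_eq_smul] at coassoc
  simp only [← (ℛ R (r.right _)).eq, map_sum, LinearMap.rTensor_tmul, Finset.mul_sum,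
    Algebra.TensorProduct.tmul_mul_tmul, one_mul]
  rw [← coassoc]
  simp only [smul_tmul, ← tmul_sum, sum_counit_smul]

variable (R A) in
/-- The anti-endomorphism `x ⊗ y ↦ S(y) ⊗ S(x)` of `A ⊗ A`, through which `Δ ∘ S` factors. -/
noncomputable def antipodeSwap : A ⊗[R] A →ₗ[R] A ⊗[R] A :=
  TensorProduct.map (antipode R) (antipode R) ∘ₗ (TensorProduct.comm R A A).toLinearMap

@[simp]
theorem antipodeSwap_tmul (x y : A) :
    antipodeSwap R A (x ⊗ₜ y) = antipode R y ⊗ₜ antipode R x :=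
  rfl

theorem antipodeSwap_mul (u v : A ⊗[R] A) :
    antipodeSwap R A (u * v) = antipodeSwap R A v * antipodeSwap R A u := by
  induction u with
  | zero => simp
  | add a b ha hb => simp only [add_mul, mul_add, map_add, ha, hb]
  | tmul a b =>
    induction v with
    | zero => simp
    | add c d hc hd => simp only [add_mul, mul_add, map_add, hc, hd]
    | tmul c d => simp [antipode_mul_antidistrib]

theorem sum_antipodeSwap_comul_mul_comul {x : A} (r : Repr R x ι) :
    ∑ i ∈ r.index, antipodeSwap R A (comul (R := R) (r.left i)) * comul (R := R) (r.right i) =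
      counit (R := R) x • 1 := by
  have coassoc := congrArg
    (LinearMap.mul' R (A ⊗[R] A) ∘ₗ TensorProduct.map (antipodeSwap R A) (comul (R := R)) ∘ₗ
      (TensorProduct.assoc R A A A).symm.toLinearMap)
    (sum_tmul_tmul_eq r (fun i => ℛ R (r.left i)) (fun i => ℛ R (r.right i)))
  have tmul_eq (a b : A) : antipode R b ⊗ₜ[R] antipode R a =
      (1 ⊗ₜ[R] antipode R a) * (antipode R b ⊗ₜ[R] 1) := by simp
  simp only [map_sum, LinearMap.comp_apply, LinearMap.mul'_apply, TensorProduct.map_tmul,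
    LinearEquiv.coe_coe, TensorProduct.assoc_symm_tmul, antipodeSwap_tmul] at coassoc
  simp only [← (ℛ R (r.left _)).eq, map_sum, Finset.sum_mul, antipodeSwap_tmul]
  rw [coassoc]
  simp only [tmul_eq, mul_assoc, ← Finset.mul_sum, sum_antipode_tmul_one_mul_comul]
  simp only [Algebra.TensorProduct.tmul_mul_tmul, mul_one, ← tmul_sum,
    sum_antipode_mul_eq_smul, tmul_smul, Algebra.TensorProduct.one_def]

theorem comul_antipode (x : A) :
    comul (R := R) (antipode R x) = antipodeSwap R A (comul x) := by
  have left_inv : WithConv.toConv (antipodeSwap R A ∘ₗ comul) * WithConv.toConv comul = 1 := by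
    ext y
    rw [(ℛ R y).convMul_apply, LinearMap.convOne_apply, Algebra.algebraMap_eq_smul_one]
    exact sum_antipodeSwap_comul_mul_comul (ℛ R y)
  have eq := left_inv_eq_right_inv left_inv LinearMap.comul_right_inv
  exact (LinearMap.congr_fun (WithConv.toConv_injective eq) x).symm

theorem sum_antipode_antipode_tmul_one_mul_comul {x : A} (r : Repr R x ι) :
    ∑ i ∈ r.index, (antipode R (antipode R (r.right i)) ⊗ₜ[R] 1) *
      comul (R := R) (antipode R (r.left i)) = 1 ⊗ₜ[R] antipode R x := by
  simpa [map_sum, antipodeSwap_mul, comul_antipode] using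
    congrArg (antipodeSwap R A) (sum_comul_mul_one_tmul_antipode r)

theorem sum_comul_antipode_mul_tmul_one {x : A} (r : Repr R x ι) :
    ∑ i ∈ r.index, comul (R := R) (antipode R (r.left i)) * (r.right i ⊗ₜ[R] 1) =
      1 ⊗ₜ[R] antipode R x := by
  have coassoc := congrArg
    ((TensorProduct.comm R A A).toLinearMap ∘ₗ
      TensorProduct.map (antipode R) (LinearMap.mul' R A ∘ₗ LinearMap.rTensor A (antipode R)))
    (sum_tmul_tmul_eq r (fun i => ℛ R (r.left i)) (fun i => ℛ R (r.right i)))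
  simp only [map_sum, LinearMap.comp_apply, LinearEquiv.coe_coe, TensorProduct.map_tmul,
    LinearMap.rTensor_tmul, LinearMap.mul'_apply, TensorProduct.comm_tmul] at coassoc
  simp only [← sum_tmul, sum_antipode_mul_eq_smul] at coassoc
  simp only [comul_antipode, ← (ℛ R (r.left _)).eq, map_sum, antipodeSwap_tmul, Finset.sum_mul,
    Algebra.TensorProduct.tmul_mul_tmul, mul_one]
  rw [coassoc]
  simp only [smul_tmul, ← tmul_sum, ← map_smul, ← map_sum, sum_counit_right_smul]

theorem sum_one_tmul_antipode_mul_comul {x : A} (r : Repr R x ι) :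
    ∑ i ∈ r.index, (1 ⊗ₜ[R] antipode R (r.right i)) *
      comul (R := R) (antipode R (antipode R (r.left i))) =
      antipode R (antipode R x) ⊗ₜ[R] 1 := by
  simpa [map_sum, antipodeSwap_mul, comul_antipode] using
    congrArg (antipodeSwap R A) (sum_comul_antipode_mul_tmul_one r)

theorem sum_one_tmul_mul_comul_antipode {x : A} (r : Repr R x ι) :
    ∑ i ∈ r.index, (1 ⊗ₜ[R] r.left i) * comul (R := R) (antipode R (r.right i)) =
      antipode R x ⊗ₜ[R] 1 := by
  have coassoc := congrArg
    ((TensorProduct.comm R A A).toLinearMap ∘ₗ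
      TensorProduct.map (LinearMap.mul' R A ∘ₗ LinearMap.lTensor A (antipode R)) (antipode R) ∘ₗ
      (TensorProduct.assoc R A A A).symm.toLinearMap)
    (sum_tmul_tmul_eq r (fun i => ℛ R (r.left i)) (fun i => ℛ R (r.right i)))
  simp only [map_sum, LinearMap.comp_apply, LinearEquiv.coe_coe, TensorProduct.assoc_symm_tmul,
    TensorProduct.map_tmul, LinearMap.lTensor_tmul, LinearMap.mul'_apply,
    TensorProduct.comm_tmul] at coassoc
  simp only [← tmul_sum, sum_mul_antipode_eq_smul] at coassoc
  simp only [comul_antipode, ← (ℛ R (r.right _)).eq, map_sum, antipodeSwap_tmul, Finset.mul_sum,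
    Algebra.TensorProduct.tmul_mul_tmul, one_mul]
  rw [← coassoc]
  simp only [tmul_smul, smul_tmul', ← sum_tmul, ← map_smul, ← map_sum, sum_counit_smul]

end Sweedler

section Contraction

open Coalgebra HopfAlgebra

variable {R A : Type*} [CommSemiring R]

section Module

variable {M N P : Type*} [AddCommMonoid M] [Module R M] [AddCommMonoid N] [Module R N]
  [AddCommMonoid P] [Module R P]

/-- The contraction `x ⊗ y ↦ p(x) y` of a tensor by a functional on its left factor. For a
coalgebra, `contractL p (comul x)` is the right action `x ↼ p = p(x₁) x₂` of the dual algebra. -/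
noncomputable def contractL (p : M →ₗ[R] R) : M ⊗[R] N →ₗ[R] N :=
  (TensorProduct.lid R N).toLinearMap ∘ₗ LinearMap.rTensor N p

/-- The contraction `x ⊗ y ↦ p(y) x` of a tensor by a functional on its right factor. For a
coalgebra, `contractR p (comul x)` is the left action `p ⇀ x = p(x₂) x₁` of the dual algebra. -/
noncomputable def contractR (p : N →ₗ[R] R) : M ⊗[R] N →ₗ[R] M :=
  (TensorProduct.rid R M).toLinearMap ∘ₗ LinearMap.lTensor M p

@[simp]
theorem contractL_tmul (p : M →ₗ[R] R) (x : M) (y : N) : contractL p (x ⊗ₜ y) = p x • y := by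
  simp [contractL]

@[simp]
theorem contractR_tmul (p : N →ₗ[R] R) (x : M) (y : N) : contractR p (x ⊗ₜ y) = p y • x := by
  simp [contractR]

theorem contractL_smul_left (c : R) (p : M →ₗ[R] R) (u : M ⊗[R] N) :
    contractL (c • p) u = c • contractL p u := by
  simp [contractL, LinearMap.rTensor_smul]

theorem contractR_smul_left (c : R) (p : N →ₗ[R] R) (u : M ⊗[R] N) :
    contractR (c • p) u = c • contractR p u := by
  simp [contractR, LinearMap.lTensor_smul]

theorem contractR_sum_left {ι : Type*} (s : Finset ι) (p : ι → N →ₗ[R] R) (u : M ⊗[R] N) :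
    contractR (∑ i ∈ s, p i) u = ∑ i ∈ s, contractR (p i) u := by
  simp only [contractR, ← LinearMap.coe_lTensorHom, map_sum, LinearMap.comp_apply,
    LinearMap.sum_apply]

theorem map_contractL (p : M →ₗ[R] R) (f : N →ₗ[R] P) (u : M ⊗[R] N) :
    f (contractL p u) = contractL p (LinearMap.lTensor M f u) := by
  induction u with
  | zero => simp
  | add u v hu hv => simp only [map_add, hu, hv]
  | tmul x y => simp

theorem map_contractR (p : N →ₗ[R] R) (f : M →ₗ[R] P) (u : M ⊗[R] N) :
    f (contractR p u) = contractR p (LinearMap.rTensor N f u) := by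
  induction u with
  | zero => simp
  | add u v hu hv => simp only [map_add, hu, hv]
  | tmul x y => simp

theorem contractR_lTensor (p : P →ₗ[R] R) (f : N →ₗ[R] P) (u : M ⊗[R] N) :
    contractR p (LinearMap.lTensor M f u) = contractR (p ∘ₗ f) u := by
  simp only [contractR, LinearMap.comp_apply, LinearMap.lTensor_comp_apply]

theorem apply_contractL (p : M →ₗ[R] R) (q : N →ₗ[R] R) (u : M ⊗[R] N) :
    q (contractL p u) = p (contractR q u) := by
  induction u with
  | zero => simp
  | add u v hu hv => simp only [map_add, hu, hv]
  | tmul x y => simp [mul_comm]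

end Module

section Coalgebra

variable [AddCommMonoid A] [Module R A] [Coalgebra R A]

theorem contractR_counit_comul (x : A) : contractR counit (comul (R := R) x) = x := by
  simp [contractR]

theorem comul_contractL_comul (p : A →ₗ[R] R) (x : A) :
    comul (contractL p (comul x)) =
      LinearMap.rTensor A (contractL p ∘ₗ comul) (comul (R := R) x) := by
  have contractL_assoc : contractL (R := R) p ∘ₗ (TensorProduct.assoc R A A A).toLinearMap =
      LinearMap.rTensor A (contractL p) := by
    ext; simp [smul_tmul']
  rw [LinearMap.rTensor_comp, LinearMap.comp_apply, ← contractL_assoc, LinearMap.comp_apply,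
    LinearEquiv.coe_coe, coassoc_apply, map_contractL]

theorem comul_contractR_comul (p : A →ₗ[R] R) (x : A) :
    comul (contractR p (comul x)) =
      LinearMap.lTensor A (contractR p ∘ₗ comul) (comul (R := R) x) := by
  have contractR_assoc : LinearMap.lTensor A (contractR p) ∘ₗ
      (TensorProduct.assoc R A A A).toLinearMap = contractR (R := R) p := by
    ext; simp
  rw [LinearMap.lTensor_comp, LinearMap.comp_apply, ← coassoc_apply, map_contractR,
    ← contractR_assoc, LinearMap.comp_apply, LinearEquiv.coe_coe]

theorem lTensor_contractL_comul (p : A →ₗ[R] R) (x : A) :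
    LinearMap.lTensor A (contractL p ∘ₗ comul) (comul (R := R) x) =
      LinearMap.rTensor A (contractR p ∘ₗ comul) (comul (R := R) x) := by
  have contract_assoc : LinearMap.lTensor A (contractL p) ∘ₗ
      (TensorProduct.assoc R A A A).toLinearMap = LinearMap.rTensor A (contractR p) := by
    ext; simp [smul_tmul]
  rw [LinearMap.lTensor_comp, LinearMap.comp_apply, ← coassoc_apply, LinearMap.rTensor_comp,
    LinearMap.comp_apply, ← contract_assoc, LinearMap.comp_apply, LinearEquiv.coe_coe]

end Coalgebra

section Algebra

variable [Semiring A] [Algebra R A]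

theorem contractL_one_tmul_mul (p : A →ₗ[R] R) (a : A) (u : A ⊗[R] A) :
    contractL p ((1 ⊗ₜ a) * u) = a * contractL p u := by
  induction u with
  | zero => simp
  | add u v hu hv => simp only [mul_add, map_add, hu, hv]
  | tmul x y => simp

theorem contractR_tmul_one_mul (p : A →ₗ[R] R) (a : A) (u : A ⊗[R] A) :
    contractR p ((a ⊗ₜ 1) * u) = a * contractR p u := by
  induction u with
  | zero => simp
  | add u v hu hv => simp only [mul_add, map_add, hu, hv]
  | tmul x y => simp

theorem contractL_tmul_one_mul (p : A →ₗ[R] R) (z : A) (u : A ⊗[R] A) :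
    contractL p ((z ⊗ₜ 1) * u) = contractL (p ∘ₗ LinearMap.mulLeft R z) u := by
  induction u with
  | zero => simp
  | add u v hu hv => simp only [mul_add, map_add, hu, hv]
  | tmul x y => simp

theorem contractR_one_tmul_mul (p : A →ₗ[R] R) (z : A) (u : A ⊗[R] A) :
    contractR p ((1 ⊗ₜ z) * u) = contractR (p ∘ₗ LinearMap.mulLeft R z) u := by
  induction u with
  | zero => simp
  | add u v hu hv => simp only [mul_add, map_add, hu, hv]
  | tmul x y => simp

end Algebra

theorem antipode_contractR [Semiring A] [HopfAlgebra R A] (p : A →ₗ[R] R) (u : A ⊗[R] A) :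
    antipode R (contractR (p ∘ₗ antipode R) u) = contractL p (antipodeSwap R A u) := by
  induction u with
  | zero => simp
  | add u v hu hv => simp only [map_add, hu, hv]
  | tmul x y => simp

end Contraction

section Integral

open Coalgebra HopfAlgebra

section Definitions

variable (R : Type*) {A : Type*} [CommSemiring R] [Semiring A]

/-- A left integral in a bialgebra: `x Λ = ε(x) Λ` for all `x`. -/
def IsLeftIntegral [Bialgebra R A] (Λ : A) : Prop :=
  ∀ x, x * Λ = counit (R := R) x • Λ

variable {R}

/-- A left integral on a bialgebra, i.e. a functional `f` with `x₁ f(x₂) = f(x) 1`. -/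
def IsLeftCointegral [Bialgebra R A] (f : A →ₗ[R] R) : Prop :=
  ∀ x, contractR f (comul x) = f x • (1 : A)

/-- A right integral on a bialgebra, i.e. a functional `f` with `f(x₁) x₂ = f(x) 1`. -/
def IsRightCointegral [Bialgebra R A] (f : A →ₗ[R] R) : Prop :=
  ∀ x, contractL f (comul x) = f x • (1 : A)

theorem IsRightCointegral.smul [Bialgebra R A] {f : A →ₗ[R] R} (hf : IsRightCointegral f) (c : R) :
    IsRightCointegral (c • f) := fun x => by
  rw [contractL_smul_left, hf, LinearMap.smul_apply, smul_assoc]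

theorem IsLeftIntegral.one_tmul_mul_comul [HopfAlgebra R A] {Λ : A} (hΛ : IsLeftIntegral R Λ)
    (x : A) : (1 ⊗ₜ[R] x) * comul (R := R) Λ = (antipode R x ⊗ₜ[R] 1) * comul (R := R) Λ := by
  rw [← sum_antipode_tmul_one_mul_comul (ℛ R x), Finset.sum_mul]
  simp only [mul_assoc, ← Bialgebra.comul_mul, hΛ _, map_smul, mul_smul_comm, ← smul_mul_assoc]
  rw [← Finset.sum_mul]
  simp only [smul_tmul', ← sum_tmul, ← map_smul, ← map_sum, sum_counit_right_smul]

end Definitions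

variable {R A : Type*} [CommRing R] [Ring A] [HopfAlgebra R A]

variable (R A) in
theorem exists_isLeftIntegral [IsSemisimpleRing A] :
    ∃ Λ : A, IsLeftIntegral R Λ ∧ counit (R := R) Λ = 1 := by
  obtain ⟨L, hL⟩ := exists_isCompl (RingHom.ker (Bialgebra.counitAlgHom R A) : Submodule A A)
  obtain ⟨a, ha : counit (R := R) a = 0, Λ, hΛ, h⟩ :=
    Submodule.mem_sup.mp (hL.sup_eq_top ▸ Submodule.mem_top (x := (1 : A)))
  have hε : counit (R := R) Λ = 1 := by
    simpa [ha] using congrArg (counit (R := R)) h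
  refine ⟨Λ, fun x => sub_eq_zero.mp (Submodule.disjoint_def.mp hL.disjoint _ ?_ ?_), hε⟩
  · rw [RingHom.mem_ker]
    simp [hε]
  · rw [← algebraMap_smul A (counit (R := R) x) Λ]
    exact L.sub_mem (L.smul_mem x hΛ) (L.smul_mem _ hΛ)

theorem eq_of_forall_dual {M : Type*} [AddCommGroup M] [Module R M] [Module.Projective R M]
    {x y : M} (h : ∀ p : M →ₗ[R] R, p x = p y) : x = y := by
  rw [← sub_eq_zero, ← Module.forall_dual_apply_eq_zero_iff R]
  exact fun p => by rw [map_sub, h, sub_self]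

section TraceCointegral

variable (R A) in
/-- The functional `h ↦ Tr(x ↦ S²(x) h)`, a right integral on `A` whose value at `1` is
`Tr(S²)`. -/
noncomputable def traceCointegral : A →ₗ[R] R :=
  LinearMap.trace R A ∘ₗ LinearMap.lcomp R A (antipode R ∘ₗ antipode R) ∘ₗ (LinearMap.mul R A).flip

theorem traceCointegral_apply (h : A) : traceCointegral R A h =
    LinearMap.trace R A (LinearMap.mulRight R h ∘ₗ antipode R ∘ₗ antipode R) :=
  rfl

theorem traceCointegral_mul [Module.Free R A] [Module.Finite R A] (h y : A) :
    traceCointegral R A (h * y) = traceCointegral R A (antipode R (antipode R y) * h) := by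
  have mulRight_mul : LinearMap.mulRight R (h * y) ∘ₗ antipode R ∘ₗ antipode R =
      LinearMap.mulRight R y ∘ₗ (LinearMap.mulRight R h ∘ₗ antipode R ∘ₗ antipode R) := by
    ext x; simp [mul_assoc]
  rw [traceCointegral_apply, mulRight_mul, LinearMap.trace_comp_comm', traceCointegral_apply]
  congr 1
  ext x
  simp [antipode_mul_antidistrib, mul_assoc]

theorem IsLeftIntegral.traceCointegral_apply [Module.Free R A] [Module.Finite R A] {Λ : A}
    (hΛ : IsLeftIntegral R Λ) : traceCointegral R A Λ = counit (R := R) Λ := by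
  have rank_one : LinearMap.mulRight R Λ ∘ₗ antipode R ∘ₗ antipode R =
      (counit (R := R) (A := A)).smulRight Λ := by
    ext x; simp [hΛ _]
  rw [MackeyPaper.traceCointegral_apply, rank_one, LinearMap.trace_smulRight]

theorem trace_comp_eq_trace_sum_contractR {V W ι : Type*} [AddCommGroup V] [Module R V]
    [AddCommGroup W] [Module R W] [Module.Free R V] [Module.Finite R V] [Fintype ι]
    (b : Module.Basis ι R W) (T : V ⊗[R] W →ₗ[R] V) (δ : V →ₗ[R] V ⊗[R] W) :
    LinearMap.trace R V (T ∘ₗ δ) = LinearMap.trace R V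
      (∑ j, contractR (b.coord j) ∘ₗ δ ∘ₗ T ∘ₗ (TensorProduct.mk R V W).flip (b j)) := by
  have expand (u : V ⊗[R] W) : ∑ j, contractR (b.coord j) u ⊗ₜ[R] b j = u := by
    induction u with
    | zero => simp
    | add u v hu hv => simp only [map_add, add_tmul, Finset.sum_add_distrib, hu, hv]
    | tmul v w =>
      simp only [contractR_tmul, Module.Basis.coord_apply, smul_tmul, ← tmul_sum, b.sum_repr]
  have split : T ∘ₗ δ =
      ∑ j, (T ∘ₗ (TensorProduct.mk R V W).flip (b j)) ∘ₗ contractR (b.coord j) ∘ₗ δ := by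
    ext v
    simp [← map_sum, expand]
  rw [split, map_sum, map_sum]
  exact Finset.sum_congr rfl fun j _ => by rw [LinearMap.trace_comp_comm']; rfl

theorem sum_coord_contractR_mulLeft_antipode {ι : Type*} [Fintype ι] (b : Module.Basis ι R A)
    (p : A →ₗ[R] R) (u : A ⊗[R] A) :
    ∑ j, b.coord j (contractR (p ∘ₗ LinearMap.mulLeft R (antipode R (b j))) u) =
      p (LinearMap.mul' R A (LinearMap.rTensor A (antipode R) u)) := by
  induction u with
  | zero => simp
  | add u v hu hv => simp only [map_add, Finset.sum_add_distrib, hu, hv]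
  | tmul x y =>
    conv_rhs => rw [← b.sum_repr x]
    simp only [contractR_tmul, LinearMap.comp_apply, LinearMap.mulLeft_apply, map_smul,
      Module.Basis.coord_apply, smul_eq_mul, LinearMap.rTensor_tmul, LinearMap.mul'_apply, map_sum,
      Finset.sum_mul, smul_mul_assoc, mul_comm]

theorem sum_contractR_coord_comul_contractR {ι : Type*} [Fintype ι] (b : Module.Basis ι R A)
    (p : A →ₗ[R] R) (y : A) :
    ∑ j, contractR (b.coord j)
      (comul (R := R) (contractR p ((1 ⊗ₜ antipode R (b j)) * comul (R := R) y))) = p 1 • y := by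
  have functional_eq : ∑ j, b.coord j ∘ₗ
      contractR (p ∘ₗ LinearMap.mulLeft R (antipode R (b j))) ∘ₗ comul = p 1 • counit := by
    ext x
    simp only [LinearMap.sum_apply, LinearMap.comp_apply, sum_coord_contractR_mulLeft_antipode,
      mul_antipode_rTensor_comul_apply, Algebra.algebraMap_eq_smul_one, map_smul,
      LinearMap.smul_apply, smul_eq_mul, mul_comm]
  simp only [contractR_one_tmul_mul, comul_contractR_comul, contractR_lTensor,
    ← contractR_sum_left, functional_eq, contractR_smul_left, contractR_counit_comul]

theorem isRightCointegral_traceCointegral [Module.Free R A] [Module.Finite R A] :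
    IsRightCointegral (traceCointegral R A) := fun h => by
  refine eq_of_forall_dual (R := R) fun p => ?_
  let b := Module.Free.chooseBasis R A
  let F : A →ₗ[R] A := LinearMap.mulRight R h ∘ₗ antipode R ∘ₗ antipode R
  let T : A ⊗[R] A →ₗ[R] A := TensorProduct.lift <|
    ((LinearMap.mul R (A ⊗[R] A)).flip.compl₁₂ (comul ∘ₗ F)
      (TensorProduct.mk R A A 1 ∘ₗ antipode R)).compr₂ (contractR p)
  have T_tmul (x y : A) : T (x ⊗ₜ y) = contractR p ((1 ⊗ₜ antipode R y) * comul (R := R) (F x)) :=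
    rfl
  have T_comp_comul : T ∘ₗ comul =
      LinearMap.mulRight R (contractR p (comul h)) ∘ₗ antipode R ∘ₗ antipode R := by
    ext x
    conv_lhs => rw [LinearMap.comp_apply, ← (ℛ R x).eq]
    simp only [LinearMap.comp_apply, LinearMap.mulRight_apply, ← contractR_tmul_one_mul,
      ← sum_one_tmul_antipode_mul_comul (ℛ R x), Finset.sum_mul, map_sum, T_tmul, F,
      Bialgebra.comul_mul, mul_assoc]
  have partial_trace : ∑ j, contractR (b.coord j) ∘ₗ comul ∘ₗ T ∘ₗ
      (TensorProduct.mk R A A).flip (b j) = p 1 • F := by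
    ext x
    simp only [LinearMap.sum_apply, LinearMap.comp_apply, LinearMap.flip_apply,
      TensorProduct.mk_apply, T_tmul, sum_contractR_coord_comul_contractR, LinearMap.smul_apply]
  calc p (contractL (traceCointegral R A) (comul h))
      = LinearMap.trace R A (T ∘ₗ comul) := by
        rw [apply_contractL, traceCointegral_apply, T_comp_comul]
    _ = p 1 * traceCointegral R A h := by
        rw [trace_comp_eq_trace_sum_contractR b, partial_trace, map_smul, smul_eq_mul,
          traceCointegral_apply]
    _ = p (traceCointegral R A h • 1) := by rw [map_smul, smul_eq_mul, mul_comm]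

theorem IsLeftIntegral.contractL_antipode_tmul_one_mul_comul [Module.Free R A] [Module.Finite R A]
    {Λ : A} (hΛ : IsLeftIntegral R Λ) (y : A) :
    contractL (traceCointegral R A) ((antipode R y ⊗ₜ 1) * comul Λ) =
      counit (R := R) Λ • y := by
  rw [← hΛ.one_tmul_mul_comul, contractL_one_tmul_mul, isRightCointegral_traceCointegral,
    hΛ.traceCointegral_apply, mul_smul_one]

theorem IsLeftCointegral.eq_mul_traceCointegral_antipode [Module.Free R A] [Module.Finite R A]
    {f : A →ₗ[R] R} (hf : IsLeftCointegral f) {Λ : A} (hΛ : IsLeftIntegral R Λ)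
    (hε : counit (R := R) Λ = 1) (y : A) :
    f y = f Λ * traceCointegral R A (antipode R y) := by
  calc f y = f (contractL (traceCointegral R A) ((antipode R y ⊗ₜ 1) * comul Λ)) := by
        rw [hΛ.contractL_antipode_tmul_one_mul_comul, hε, one_smul]
    _ = f Λ * traceCointegral R A (antipode R y) := by
        rw [apply_contractL, contractR_tmul_one_mul, hf, mul_smul_one, map_smul, smul_eq_mul]

end TraceCointegral

section Antipode

variable (R A) [IsSemisimpleRing A]

theorem antipode_injective [Module.Free R A] [Module.Finite R A] :
    Function.Injective (antipode R (A := A)) := by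
  obtain ⟨Λ, hΛ, hε⟩ := exists_isLeftIntegral R A
  intro x y hxy
  rw [← one_smul R x, ← one_smul R y, ← hε, ← hΛ.contractL_antipode_tmul_one_mul_comul, hxy,
    hΛ.contractL_antipode_tmul_one_mul_comul]

theorem IsRightCointegral.comp_antipode [Module.Free R A] [Module.Finite R A] {f : A →ₗ[R] R}
    (hf : IsRightCointegral f) : IsLeftCointegral (f ∘ₗ antipode R) := fun x => by
  apply antipode_injective R A
  rw [antipode_contractR, ← comul_antipode, hf, map_smul, antipode_one, LinearMap.comp_apply]

theorem antipode_surjective (k H : Type*) [Field k] [Ring H] [HopfAlgebra k H]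
    [FiniteDimensional k H] [IsSemisimpleRing H] : Function.Surjective (antipode k (A := H)) :=
  LinearMap.injective_iff_surjective.mp (antipode_injective k H)

end Antipode

theorem IsLeftIntegral.antipode_eq {k H : Type*} [Field k] [Ring H] [HopfAlgebra k H]
    [FiniteDimensional k H] [IsSemisimpleRing H] {Λ : H} (hΛ : IsLeftIntegral k Λ)
    (hε : counit (R := k) Λ = 1) : antipode k Λ = Λ := by
  have antipode_mul_self : antipode k Λ * Λ = antipode k Λ := by
    obtain ⟨y, hy⟩ := antipode_surjective k H Λ
    have hεy : counit (R := k) y = 1 := by rw [← counit_antipode, hy, hε]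
    calc antipode k Λ * Λ = antipode k (y * Λ) := by rw [antipode_mul_antidistrib, hy]
      _ = antipode k Λ := by rw [hΛ, hεy, one_smul]
  rw [← antipode_mul_self, hΛ, counit_antipode, hε, one_smul]

end Integral

section FiniteOrder

open Coalgebra HopfAlgebra

theorem IsLeftCointegral.comp_contractL_comul {R A : Type*} [CommSemiring R] [Semiring A]
    [Bialgebra R A] {ψ : A →ₗ[R] R} (hψ : IsLeftCointegral ψ) (p : A →ₗ[R] R) :
    IsLeftCointegral (p ∘ₗ contractL ψ ∘ₗ comul) := fun h => by
  rw [← contractR_lTensor, lTensor_contractL_comul, ← map_contractR, LinearMap.comp_apply, hψ,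
    LinearMap.comp_apply, LinearMap.comp_apply, apply_contractL]

section CommRing

variable {R A : Type*} [CommRing R] [Ring A] [HopfAlgebra R A] [Module.Free R A]
  [Module.Finite R A] [IsSemisimpleRing A]

theorem IsLeftIntegral.contractL_traceCointegral_antipode_comul {Λ : A} (hΛ : IsLeftIntegral R Λ)
    (hε : counit (R := R) Λ = 1) (y : A) :
    contractL (traceCointegral R A ∘ₗ antipode R) (comul y) =
      traceCointegral R A (antipode R y) •
        contractL (traceCointegral R A ∘ₗ antipode R) (comul Λ) := by
  refine eq_of_forall_dual (R := R) fun p => ?_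
  have cointegral := isRightCointegral_traceCointegral.comp_antipode.comp_contractL_comul p
  rw [map_smul, smul_eq_mul, mul_comm]
  exact cointegral.eq_mul_traceCointegral_antipode hΛ hε y

end CommRing

variable {k H : Type*} [Field k] [Ring H] [HopfAlgebra k H] [FiniteDimensional k H]
  [IsSemisimpleRing H]

theorem IsLeftIntegral.isGroupLikeElem_contractL {Λ : H} (hΛ : IsLeftIntegral k Λ)
    (hε : counit (R := k) Λ = 1) :
    IsGroupLikeElem k (contractL (traceCointegral k H ∘ₗ antipode k) (comul Λ)) where
  counit_eq_one := by
    rw [apply_contractL, contractR_counit_comul, LinearMap.comp_apply, hΛ.antipode_eq hε,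
      hΛ.traceCointegral_apply, hε]
  comul_eq_tmul_self := by
    set w := contractL (traceCointegral k H ∘ₗ antipode k) (comul Λ) with w_def
    have hit_eq : contractL (traceCointegral k H ∘ₗ antipode k) ∘ₗ comul =
        LinearMap.toSpanSingleton k H w ∘ₗ traceCointegral k H ∘ₗ antipode k :=
      LinearMap.ext fun y => hΛ.contractL_traceCointegral_antipode_comul hε y
    have rTensor_span (u : H ⊗[k] H) : LinearMap.rTensor H (LinearMap.toSpanSingleton k H w ∘ₗ
        traceCointegral k H ∘ₗ antipode k) u =
          w ⊗ₜ contractL (traceCointegral k H ∘ₗ antipode k) u := by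
      induction u with
      | zero => simp
      | add u v hu hv => simp only [map_add, tmul_add, hu, hv]
      | tmul x y => simp [smul_tmul]
    rw [w_def, comul_contractL_comul, hit_eq, rTensor_span]

theorem eq_zero_of_forall_traceCointegral_mul {z : H} (h : ∀ x, traceCointegral k H (z * x) = 0) :
    z = 0 := by
  obtain ⟨Λ, hΛ, hε⟩ := exists_isLeftIntegral k H
  obtain ⟨y, rfl⟩ := antipode_surjective k H z
  have comp_eq_zero : traceCointegral k H ∘ₗ LinearMap.mulLeft k (antipode k y) =
      (0 : k) • traceCointegral k H := LinearMap.ext fun x => by simp [h x]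
  rw [← one_smul k y, ← hε, ← hΛ.contractL_antipode_tmul_one_mul_comul, contractL_tmul_one_mul,
    comp_eq_zero, contractL_smul_left, zero_smul, map_zero]

theorem exists_forall_traceCointegral_mul_eq (f : H →ₗ[k] k) :
    ∃ g, ∀ x, traceCointegral k H (g * x) = f x := by
  let θ : H →ₗ[k] (H →ₗ[k] k) := (LinearMap.mul k H).compr₂ (traceCointegral k H)
  have injective : Function.Injective θ := by
    rw [injective_iff_map_eq_zero]
    exact fun z hz => eq_zero_of_forall_traceCointegral_mul (LinearMap.congr_fun hz)
  obtain ⟨g, hg⟩ := (LinearMap.injective_iff_surjective_of_finrank_eq_finrank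
    (Subspace.dual_finrank_eq (K := k) (V := H)).symm).mp injective f
  exact ⟨g, LinearMap.congr_fun hg⟩

theorem isGroupLikeElem_of_traceCointegral_mul {g : H}
    (hg : ∀ x, traceCointegral k H (g * x) = traceCointegral k H (antipode k x)) :
    IsGroupLikeElem k g := by
  obtain ⟨Λ, hΛ, hε⟩ := exists_isLeftIntegral k H
  obtain ⟨y, rfl⟩ := antipode_surjective k H g
  have comp_eq : traceCointegral k H ∘ₗ LinearMap.mulLeft k (antipode k y) =
      traceCointegral k H ∘ₗ antipode k := LinearMap.ext hg
  have contractL_eq := hΛ.contractL_antipode_tmul_one_mul_comul y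
  rw [contractL_tmul_one_mul, comp_eq, hε, one_smul] at contractL_eq
  rw [← contractL_eq]
  exact (hΛ.isGroupLikeElem_contractL hε).antipode

/- Radford's formula, in which the second grouplike factor is trivial as the integrals in `H` are
two-sided: the Nakayama automorphism of the form `t(xy)` is `S²`, and comparing it with the one of
`t(S(x))` leaves a grouplike element. -/
variable (k H) in
theorem exists_isGroupLikeElem_mul_eq_antipode_pow_four_mul :
    ∃ g : H, IsGroupLikeElem k g ∧
      ∀ x, g * x = antipode k (antipode k (antipode k (antipode k x))) * g := by
  obtain ⟨g, hg⟩ := exists_forall_traceCointegral_mul_eq (traceCointegral k H ∘ₗ antipode k)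
  simp only [LinearMap.comp_apply] at hg
  refine ⟨g, isGroupLikeElem_of_traceCointegral_mul hg, fun x => ?_⟩
  refine sub_eq_zero.mp (eq_zero_of_forall_traceCointegral_mul (k := k) fun y => ?_)
  rw [sub_mul, map_sub, sub_eq_zero, mul_assoc, hg, mul_assoc, antipode_mul_antidistrib,
    traceCointegral_mul, ← antipode_mul_antidistrib, ← hg, ← mul_assoc, traceCointegral_mul]

variable (k H) in
/-- The square of the antipode, as an algebra automorphism. -/
noncomputable def antipodeSq : H ≃ₐ[k] H :=
  AlgEquiv.ofBijective
    (AlgHom.ofLinearMap (antipode k ∘ₗ antipode k) (by simp) fun x y => by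
      simp [antipode_mul_antidistrib])
    ⟨(antipode_injective k H).comp (antipode_injective k H),
      (antipode_surjective k H).comp (antipode_surjective k H)⟩

theorem antipodeSq_apply (x : H) : antipodeSq k H x = antipode k (antipode k x) :=
  rfl

variable (k H) in
theorem exists_antipodeSq_pow_eq_one : ∃ N : ℕ, N ≠ 0 ∧ antipodeSq k H ^ N = 1 := by
  obtain ⟨g, hg, conj⟩ := exists_isGroupLikeElem_mul_eq_antipode_pow_four_mul k H
  have : Finite (GroupLike k H) := (linearIndep_groupLikeVal (R := k) (A := H)).finite
  obtain ⟨n, hn, hpow⟩ := isOfFinOrder_iff_pow_eq_one.mp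
    (isOfFinOrder_of_finite (⟨g, hg⟩ : GroupLike k H))
  have g_pow : g ^ n = 1 := by simpa using congrArg GroupLike.val hpow
  have pow_mul_eq (m : ℕ) (x : H) : g ^ m * x = (antipodeSq k H ^ (2 * m)) x * g ^ m := by
    induction m with
    | zero => simp
    | succ m ih =>
      rw [pow_succ', mul_assoc, ih, ← mul_assoc, conj, ← antipodeSq_apply, ← antipodeSq_apply,
        ← AlgEquiv.mul_apply, ← AlgEquiv.mul_apply, ← pow_two, ← pow_add, mul_assoc, mul_add_one,
        add_comm]
  refine ⟨2 * n, by positivity, AlgEquiv.ext fun x => ?_⟩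
  simpa only [g_pow, one_mul, mul_one, AlgEquiv.one_apply] using (pow_mul_eq n x).symm

end FiniteOrder

section TraceAutomorphism

open Module

theorem trace_mulLeftRight {R M : Type*} [CommRing R] [AddCommGroup M] [Module R M]
    [Module.Free R M] [Module.Finite R M] (f g : End R M) :
    LinearMap.trace R (End R M) (LinearMap.mulLeftRight R (f, g)) =
      LinearMap.trace R M f * LinearMap.trace R M g := by
  let e : Dual R M ⊗[R] M ≃ₗ[R] End R M := dualTensorHomEquiv R M M
  have conj_map : LinearMap.mulLeftRight R (f, g) =
      e.conj (TensorProduct.map (Dual.transpose g) f) := by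
    refine LinearMap.ext fun X => ?_
    obtain ⟨t, rfl⟩ := e.surjective X
    rw [LinearEquiv.conj_apply_apply, e.symm_apply_apply]
    induction t with
    | zero => simp only [map_zero]
    | add t₁ t₂ h₁ h₂ => simp only [map_add, h₁, h₂]
    | tmul φ m =>
      ext x
      simp only [e, dualTensorHomEquiv, LinearEquiv.ofBijective_apply, TensorProduct.map_tmul]
      simp
      rfl
  rw [conj_map, LinearMap.trace_conj' (M := Dual R M ⊗[R] M) (N := End R M),
    LinearMap.trace_tensorProduct', LinearMap.trace_transpose', mul_comm]

theorem trace_eq_sum_of_forall_apply_eq_smul {R M ι : Type*} [CommRing R] [AddCommGroup M]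
    [Module R M] [Fintype ι] (b : Basis ι R M) {f : End R M} {μ : ι → R}
    (h : ∀ i, f (b i) = μ i • b i) : LinearMap.trace R M f = ∑ i, μ i := by
  classical
  rw [LinearMap.trace_eq_matrix_trace R b, Matrix.trace]
  exact Finset.sum_congr rfl fun i _ => by simp [LinearMap.toMatrix_apply, h]

variable {k : Type*} [Field k]

section End

variable {V : Type*} [AddCommGroup V] [Module k V] [FiniteDimensional k V]

theorem exists_algEquiv_eq_conj (α : End k V ≃ₐ[k] End k V) :
    ∃ u : (End k V)ˣ, ∀ n X, (α ^ n) X = ↑(u ^ n) * X * ↑(u ^ n)⁻¹ := by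
  obtain ⟨g, rfl⟩ := End.mulSemiringActionToAlgEquiv_conjAct_surjective α
  refine ⟨ConjAct.ofConjAct g, fun n X => ?_⟩
  have : MulSemiringAction.toAlgEquiv k (End k V) g ^ n =
      MulSemiringAction.toAlgEquiv k (End k V) (g ^ n) :=
    (map_pow (MulSemiringAction.toAlgAut _ k (End k V)) g n).symm
  rw [this]
  rfl

variable [IsAlgClosed k]

theorem exists_basis_eigenvector_of_pow_eq_one {T : End k V} {N : ℕ} (hN : (N : k) ≠ 0)
    (hT : T ^ N = 1) :
    ∃ (n : ℕ) (b : Basis (Fin n) k V) (μ : Fin n → k), ∀ i, T.HasEigenvector (μ i) (b i) := by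
  classical
  have hs : T.IsSemisimple := by
    refine End.isSemisimple_of_squarefree_aeval_eq_zero
      (p := Polynomial.X ^ N - 1) ?_ (by simp [hT])
    exact (Polynomial.X_pow_sub_one_separable_iff.mpr hN).squarefree
  have internal := DirectSum.isInternal_submodule_of_iSupIndep_of_iSup_eq_top
    T.eigenspaces_iSupIndep hs.iSup_eigenspace_eq_top
  let v := internal.collectedBasis fun μ => finBasis k (T.eigenspace μ)
  have := FiniteDimensional.fintypeBasisIndex v
  let e := Fintype.equivFin ((ν : k) × Fin (finrank k (T.eigenspace ν)))
  refine ⟨_, v.reindex e, fun i => (e.symm i).1, fun i => ?_⟩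
  rw [v.reindex_apply]
  exact ⟨internal.collectedBasis_mem _ _, v.ne_zero _⟩

theorem exists_trace_eq_sum_trace_inv_eq_sum_inv {u : (End k V)ˣ} {N : ℕ} (hN : (N : k) ≠ 0)
    (hu : u ^ N = 1) :
    ∃ (n : ℕ) (μ : Fin n → k), (∀ i, μ i ^ N = 1) ∧
      LinearMap.trace k V (u : End k V) = ∑ i, μ i ∧
      LinearMap.trace k V (↑u⁻¹ : End k V) = ∑ i, (μ i)⁻¹ := by
  have hu' : (u : End k V) ^ N = 1 := by rw [← Units.val_pow_eq_pow_val, hu, Units.val_one]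
  obtain ⟨n, b, μ, hb⟩ := exists_basis_eigenvector_of_pow_eq_one hN hu'
  have pow_eq_one (i) : μ i ^ N = 1 :=
    smul_left_injective k (hb i).2 <| by simp [← (hb i).pow_apply, hu']
  have ne_zero (i) : μ i ≠ 0 :=
    ne_zero_pow (n := N) (fun h => hN (by rw [h, Nat.cast_zero])) (by simp [pow_eq_one])
  refine ⟨n, μ, pow_eq_one, trace_eq_sum_of_forall_apply_eq_smul b fun i => (hb i).apply_eq_smul,
    trace_eq_sum_of_forall_apply_eq_smul b fun i => ?_⟩
  have inv_apply : (↑u⁻¹ : End k V) ((u : End k V) (b i)) = b i := by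
    rw [← End.mul_apply, Units.inv_mul, End.one_apply]
  rw [(hb i).apply_eq_smul, map_smul] at inv_apply
  rw [eq_inv_smul_iff₀ (ne_zero i), inv_apply]

theorem exists_units_pow_eq_one_algEquiv_eq_conj [Nontrivial V] (α : End k V ≃ₐ[k] End k V)
    {N : ℕ} (hN : N ≠ 0) (hα : α ^ N = 1) :
    ∃ u : (End k V)ˣ, u ^ N = 1 ∧ ∀ X, α X = ↑u * X * ↑u⁻¹ := by
  obtain ⟨u, hu⟩ := exists_algEquiv_eq_conj α
  have central : (↑(u ^ N) : End k V) ∈ Subalgebra.center k (End k V) := by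
    refine Subalgebra.mem_center_iff.mpr fun X => ?_
    rw [← Units.eq_mul_inv_iff_mul_eq, ← hu, hα, AlgEquiv.one_apply]
  rw [Algebra.IsCentral.center_eq_bot, Algebra.mem_bot] at central
  obtain ⟨c, hc⟩ := central
  obtain ⟨d, rfl⟩ := IsAlgClosed.exists_pow_nat_eq c (Nat.pos_of_ne_zero hN)
  have hd : d ≠ 0 := by
    rintro rfl
    exact (u ^ N).ne_zero (by rw [← hc, zero_pow hN, map_zero])
  let δ : (End k V)ˣ := Units.map (algebraMap k (End k V)) (Units.mk0 d hd)
  have commute_δ (X : End k V) : Commute (δ : End k V) X := Algebra.commutes d X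
  refine ⟨δ⁻¹ * u, ?_, fun X => ?_⟩
  · have δ_pow : δ ^ N = u ^ N := Units.ext <| by rw [← hc]; simp [δ]
    rw [(show Commute δ u from Units.ext (commute_δ u)).inv_left.mul_pow, inv_pow, δ_pow,
      inv_mul_cancel]
  · calc α X = ↑u * X * ↑u⁻¹ := by simpa using hu 1 X
      _ = ↑δ⁻¹ * (↑u * X * ↑u⁻¹ * ↑δ) := by rw [← commute_δ, Units.inv_mul_cancel_left]
      _ = ↑(δ⁻¹ * u) * X * ↑(δ⁻¹ * u)⁻¹ := by simp [mul_assoc]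

end End

section NonnegAlgebraic

open scoped ComplexOrder

variable [CharZero k] (σ : algebraicClosure ℚ k →ₐ[ℚ] ℂ)

/-- The additive cone of those algebraic numbers in `k` which an embedding `σ` of the algebraic
numbers into `ℂ` sends to non-negative reals. As `k` itself need not embed into `ℂ`, positivity
arguments over `k` are made inside this cone. -/
noncomputable def nonnegAlgebraic : AddSubmonoid k :=
  ((AddSubmonoid.nonneg ℂ).comap σ).map (algebraicClosure ℚ k).val

variable {σ}

theorem eq_zero_of_sum_eq_zero_of_mem_nonnegAlgebraic {ι : Type*} {s : Finset ι} {f : ι → k}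
    (hf : ∀ i ∈ s, f i ∈ nonnegAlgebraic σ) (h : ∑ i ∈ s, f i = 0) : ∀ i ∈ s, f i = 0 := by
  have mem (i : s) : ∃ z : algebraicClosure ℚ k, 0 ≤ σ z ∧ (z : k) = f i := hf i i.2
  choose z z_nonneg z_eq using mem
  have sum_eq_zero : ∑ i, z i = 0 := Subtype.ext <| by
    rw [AddSubmonoidClass.coe_finsetSum, ZeroMemClass.coe_zero, ← h, ← Finset.sum_coe_sort s f]
    exact Finset.sum_congr rfl fun i _ => z_eq i
  have image_eq_zero := (Finset.sum_eq_zero_iff_of_nonneg fun i _ => z_nonneg i).mp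
    (by rw [← map_sum, sum_eq_zero, map_zero] : ∑ i, σ (z i) = 0)
  intro i hi
  have := image_eq_zero ⟨i, hi⟩ (Finset.mem_univ _)
  rw [map_eq_zero] at this
  rw [← z_eq ⟨i, hi⟩, this, ZeroMemClass.coe_zero]

variable (σ)

/- Inversion of roots of unity is complex conjugation, so the product is `|∑ μᵢ|²`. -/
theorem sum_mul_sum_inv_mem_nonnegAlgebraic {ι : Type*} [Fintype ι] {N : ℕ} (hN : N ≠ 0)
    {μ : ι → k} (hμ : ∀ i, μ i ^ N = 1) :
    (∑ i, μ i) * ∑ i, (μ i)⁻¹ ∈ nonnegAlgebraic σ := by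
  have isAlgebraic (i) : μ i ∈ algebraicClosure ℚ k := mem_algebraicClosure_iff.mpr
    ⟨Polynomial.X ^ N - 1, (Polynomial.monic_X_pow_sub_C (1 : ℚ) hN).ne_zero, by simp [hμ i]⟩
  let z (i) : algebraicClosure ℚ k := ⟨μ i, isAlgebraic i⟩
  have map_inv_eq_star (i) : σ (z i)⁻¹ = star (σ (z i)) := by
    have z_pow : z i ^ N = 1 := Subtype.ext (hμ i)
    rw [map_inv₀]
    exact Complex.inv_eq_conj <|
      Complex.norm_eq_one_of_pow_eq_one (by rw [← map_pow, z_pow, map_one]) hN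
  refine ⟨(∑ i, z i) * ∑ i, (z i)⁻¹, ?_, by simp [z]⟩
  change 0 ≤ σ _
  simp only [map_mul, map_sum, map_inv_eq_star]
  rw [← star_sum]
  exact mul_star_self_nonneg _

theorem trace_algEquiv_mem_nonnegAlgebraic [IsAlgClosed k] {V : Type*} [AddCommGroup V]
    [Module k V] [FiniteDimensional k V] [Nontrivial V] {α : End k V ≃ₐ[k] End k V} {N : ℕ}
    (hN : N ≠ 0) (hα : α ^ N = 1) :
    LinearMap.trace k (End k V) α.toLinearMap ∈ nonnegAlgebraic σ := by
  obtain ⟨u, hu, conj⟩ := exists_units_pow_eq_one_algEquiv_eq_conj α hN hα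
  obtain ⟨n, μ, hμ, trace_eq, trace_inv_eq⟩ :=
    exists_trace_eq_sum_trace_inv_eq_sum_inv (Nat.cast_ne_zero.mpr hN) hu
  have toLinearMap_eq : α.toLinearMap = LinearMap.mulLeftRight k (↑u, ↑u⁻¹) := by
    ext1 X
    rw [AlgEquiv.toLinearMap_apply, conj, LinearMap.mulLeftRight_apply]
  rw [toLinearMap_eq, trace_mulLeftRight, trace_eq, trace_inv_eq]
  exact sum_mul_sum_inv_mem_nonnegAlgebraic σ hN hμ

end NonnegAlgebraic

end TraceAutomorphism

section DiagonalBlock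

open Module

section Module

variable {R ι : Type*} [CommRing R] [DecidableEq ι] {M : ι → Type*} [∀ i, AddCommGroup (M i)]
  [∀ i, Module R (M i)]

/-- The `i`-th diagonal block of an endomorphism of a product. -/
def diagBlock (f : (Π i, M i) →ₗ[R] Π i, M i) (i : ι) : M i →ₗ[R] M i :=
  LinearMap.proj i ∘ₗ f ∘ₗ LinearMap.single R M i

theorem diagBlock_apply (f : (Π i, M i) →ₗ[R] Π i, M i) (i : ι) (x : M i) :
    diagBlock f i x = f (Pi.single i x) i :=
  rfl

theorem trace_eq_sum_trace_diagBlock [Fintype ι] [∀ i, Module.Free R (M i)]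
    [∀ i, Module.Finite R (M i)] (f : (Π i, M i) →ₗ[R] Π i, M i) :
    LinearMap.trace R (Π i, M i) f = ∑ i, LinearMap.trace R (M i) (diagBlock f i) := by
  have sum_columns : f = ∑ i, (f ∘ₗ LinearMap.single R M i) ∘ₗ LinearMap.proj i := by
    refine LinearMap.ext fun x => ?_
    simp only [LinearMap.sum_apply, LinearMap.comp_apply, LinearMap.proj_apply,
      LinearMap.coe_single]
    rw [← map_sum, Finset.univ_sum_single]
  conv_lhs => rw [sum_columns]
  rw [map_sum]
  exact Finset.sum_congr rfl fun i _ => LinearMap.trace_comp_comm' _ _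

end Module

section Algebra

variable {R ι : Type*} [CommRing R] [DecidableEq ι] {A : ι → Type*} [∀ i, Ring (A i)]
  [∀ i, Algebra R (A i)]

theorem single_one_mul (i : ι) (x : Π i, A i) : Pi.single i 1 * x = Pi.single i (x i) := by
  rw [← Pi.single_mul_left, one_mul]

theorem mul_single_one (i : ι) (x : Π i, A i) : x * Pi.single i 1 = Pi.single i (x i) := by
  rw [← Pi.single_mul_right, mul_one]

variable {τ : (Π i, A i) ≃ₐ[R] Π i, A i} {i : ι}

theorem diagBlock_mul (x y : A i) : diagBlock τ.toLinearMap i (x * y) =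
    diagBlock τ.toLinearMap i x * diagBlock τ.toLinearMap i y := by
  simp only [diagBlock_apply, Pi.single_mul, AlgEquiv.toLinearMap_apply, map_mul, Pi.mul_apply]

theorem diagBlock_one_eq_zero_or_one {k : Type*} [Field k] [∀ i, Algebra k (A i)]
    [Algebra.IsCentral k (A i)] [Nontrivial (A i)] (τ : (Π i, A i) ≃ₐ[k] Π i, A i) :
    diagBlock τ.toLinearMap i 1 = 0 ∨ diagBlock τ.toLinearMap i 1 = 1 := by
  have central : diagBlock τ.toLinearMap i 1 ∈ Subalgebra.center k (A i) := by
    refine Subalgebra.mem_center_iff.mpr fun y => ?_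
    obtain ⟨x, hx⟩ := τ.surjective (Pi.single i y)
    have : τ (x * Pi.single i 1) i = τ (Pi.single i 1 * x) i := by
      rw [single_one_mul, mul_single_one]
    simpa [hx, diagBlock_apply] using this
  rw [Algebra.IsCentral.center_eq_bot, Algebra.mem_bot] at central
  obtain ⟨c, hc⟩ := central
  have idempotent : IsIdempotentElem c := (algebraMap k (A i)).injective <| by
    rw [map_mul, hc, ← diagBlock_mul, mul_one]
  rw [← hc]
  rcases IsIdempotentElem.iff_eq_zero_or_one.mp idempotent with rfl | rfl
  · exact .inl (map_zero _)
  · exact .inr (map_one _)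

/- The idempotent `e = Pi.single i 1` satisfies `e ≤ τ e`, hence
`e ≤ τ e ≤ τ² e ≤ ⋯ ≤ τ ^ N e = e`. -/
theorem apply_single_one_of_diagBlock_one_eq_one {N : ℕ} (hN : N ≠ 0) (hτ : τ ^ N = 1)
    (h : diagBlock τ.toLinearMap i 1 = 1) : τ (Pi.single i 1) = Pi.single i 1 := by
  set e : Π i, A i := Pi.single i 1 with e_def
  have apply_e : τ e i = 1 := h
  have e_mul : e * τ e = e := by rw [e_def, single_one_mul, ← e_def, apply_e]
  have mul_e : τ e * e = e := by rw [e_def, mul_single_one, ← e_def, apply_e]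
  have mul_pow (n : ℕ) : τ e * (τ ^ (n + 1)) e = τ e := by
    induction n with
    | zero => rw [zero_add, pow_one, ← map_mul, e_def, single_one_mul, Pi.single_eq_same]
    | succ n ih =>
      rw [← ih, mul_assoc, pow_succ τ (n + 1), AlgEquiv.mul_apply, ← map_mul, e_mul]
  obtain ⟨n, rfl⟩ := Nat.exists_eq_succ_of_ne_zero hN
  rw [← mul_pow n, ← Nat.succ_eq_add_one, hτ, AlgEquiv.one_apply, mul_e]

theorem single_diagBlock (h : τ (Pi.single i 1) = Pi.single i 1) (x : A i) :
    Pi.single i (diagBlock τ.toLinearMap i x) = τ (Pi.single i x) := by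
  have mul_single : Pi.single i 1 * Pi.single i x = (Pi.single i x : Π i, A i) := by
    rw [single_one_mul, Pi.single_eq_same]
  rw [← mul_single, map_mul, h, single_one_mul]
  rfl

/-- The automorphism of a factor `A i` induced by an automorphism of the product fixing the
corresponding central idempotent. -/
def diagBlockEquiv (τ : (Π i, A i) ≃ₐ[R] Π i, A i) (h : τ (Pi.single i 1) = Pi.single i 1) :
    A i ≃ₐ[R] A i :=
  AlgEquiv.ofLinearEquiv
    (LinearEquiv.ofLinearMap (diagBlock τ.toLinearMap i) (diagBlock τ.symm.toLinearMap i)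
      (LinearMap.ext fun x => by
        have := single_diagBlock (τ.symm_apply_eq.mpr h.symm) x
        simp [diagBlock_apply τ.toLinearMap, this])
      (LinearMap.ext fun x => by
        simp [diagBlock_apply τ.symm.toLinearMap, single_diagBlock h]))
    (congrFun h i |>.trans (Pi.single_eq_same i 1)) diagBlock_mul

theorem diagBlockEquiv_pow {N : ℕ} (hτ : τ ^ N = 1) (h : τ (Pi.single i 1) = Pi.single i 1) :
    diagBlockEquiv τ h ^ N = 1 := by
  have single_pow (n : ℕ) (x : A i) :
      Pi.single i ((diagBlockEquiv τ h ^ n) x) = (τ ^ n) (Pi.single i x) := by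
    induction n with
    | zero => simp
    | succ n ih =>
      rw [pow_succ', pow_succ', AlgEquiv.mul_apply, AlgEquiv.mul_apply, ← ih, ← single_diagBlock h]
      rfl
  refine AlgEquiv.ext fun x => Pi.single_injective (M := A) i ?_
  rw [single_pow, hτ, AlgEquiv.one_apply, AlgEquiv.one_apply]

end Algebra

section Field

variable {k ι : Type*} [Field k]

theorem exists_diagBlock_eq_id [Finite ι] [DecidableEq ι] {A : ι → Type*} [∀ i, Ring (A i)]
    [∀ i, Algebra k (A i)] [∀ i, Algebra.IsCentral k (A i)] [∀ i, IsSimpleRing (A i)]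
    {τ : (Π i, A i) ≃ₐ[k] Π i, A i} {N : ℕ} (hN : N ≠ 0) (hτ : τ ^ N = 1)
    {χ : (Π i, A i) →ₐ[k] k} (hχ : ∀ x, χ (τ x) = χ x) :
    ∃ i, diagBlock τ.toLinearMap i = LinearMap.id := by
  obtain ⟨i, hi⟩ : ∃ i, χ (Pi.single i 1) ≠ 0 := by
    by_contra! h
    cases nonempty_fintype ι
    have := congrArg χ (Finset.univ_sum_single (1 : Π i, A i))
    simp [h] at this
  have χ_single_one : χ (Pi.single i 1) = 1 := mul_left_cancel₀ hi <| by
    rw [← map_mul, single_one_mul, Pi.single_eq_same, mul_one]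
  have diagBlock_one : diagBlock τ.toLinearMap i 1 = 1 :=
    (diagBlock_one_eq_zero_or_one τ).resolve_left fun h0 => hi <| by
      have : Pi.single i 1 * τ (Pi.single i 1) = 0 := by
        rw [single_one_mul, ← AlgEquiv.toLinearMap_apply, ← diagBlock_apply, h0, Pi.single_zero]
      simpa [hχ] using congrArg χ this
  let χ_block : A i →ₐ[k] k := AlgHom.ofLinearMap (χ.toLinearMap ∘ₗ LinearMap.single k A i)
    χ_single_one fun x y => by simp [Pi.single_mul]
  refine ⟨i, LinearMap.ext fun x => χ_block.toRingHom.injective ?_⟩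
  change χ (Pi.single i (diagBlock τ.toLinearMap i x)) = χ (Pi.single i x)
  rw [single_diagBlock (apply_single_one_of_diagBlock_one_eq_one hN hτ diagBlock_one), hχ]

theorem isSimpleRing_end {V : Type*} [AddCommGroup V] [Module k V] [FiniteDimensional k V]
    [Nontrivial V] : IsSimpleRing (End k V) :=
  have := (finBasis k V).index_nonempty
  .of_ringEquiv (LinearMap.toMatrixAlgEquiv (finBasis k V)).symm.toRingEquiv inferInstance

variable [IsAlgClosed k] [CharZero k] {V : ι → Type*} [∀ i, AddCommGroup (V i)]
  [∀ i, Module k (V i)] [∀ i, FiniteDimensional k (V i)] [∀ i, Nontrivial (V i)]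
  {τ : (Π i, End k (V i)) ≃ₐ[k] Π i, End k (V i)} {N : ℕ}

theorem trace_diagBlock_mem_nonnegAlgebraic [DecidableEq ι] (σ : algebraicClosure ℚ k →ₐ[ℚ] ℂ)
    (hN : N ≠ 0) (hτ : τ ^ N = 1) (i : ι) :
    LinearMap.trace k (End k (V i)) (diagBlock τ.toLinearMap i) ∈ nonnegAlgebraic σ := by
  rcases diagBlock_one_eq_zero_or_one τ (i := i) with h | h
  · have diagBlock_eq_zero : diagBlock τ.toLinearMap i = 0 := LinearMap.ext fun x => by
      rw [← one_mul x, diagBlock_mul, h, zero_mul, LinearMap.zero_apply]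
    rw [diagBlock_eq_zero, map_zero]
    exact zero_mem _
  · exact trace_algEquiv_mem_nonnegAlgebraic σ hN
      (diagBlockEquiv_pow hτ (apply_single_one_of_diagBlock_one_eq_one hN hτ h))

theorem trace_algEquiv_ne_zero [Finite ι] (hN : N ≠ 0) (hτ : τ ^ N = 1)
    {χ : (Π i, End k (V i)) →ₐ[k] k} (hχ : ∀ x, χ (τ x) = χ x) :
    LinearMap.trace k (Π i, End k (V i)) τ.toLinearMap ≠ 0 := by
  classical
  cases nonempty_fintype ι
  have : Algebra.IsAlgebraic ℚ (algebraicClosure ℚ k) := algebraicClosure.isAlgebraic ℚ k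
  let σ : algebraicClosure ℚ k →ₐ[ℚ] ℂ := IsAlgClosed.lift
  have (i : ι) : IsSimpleRing (End k (V i)) := isSimpleRing_end
  obtain ⟨i, hi⟩ := exists_diagBlock_eq_id hN hτ hχ
  intro h
  rw [trace_eq_sum_trace_diagBlock] at h
  have trace_eq_zero := eq_zero_of_sum_eq_zero_of_mem_nonnegAlgebraic
    (fun j _ => trace_diagBlock_mem_nonnegAlgebraic σ hN hτ j) h i (Finset.mem_univ i)
  rw [hi, LinearMap.trace_id, Nat.cast_eq_zero] at trace_eq_zero
  exact (finrank_pos (R := k) (M := End k (V i))).ne' trace_eq_zero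

end Field

end DiagonalBlock

section Haar

open Coalgebra HopfAlgebra

variable (k H : Type*) [Field k] [Ring H] [HopfAlgebra k H]

theorem traceCointegral_one_ne_zero [FiniteDimensional k H] [IsSemisimpleRing H] [IsAlgClosed k]
    [CharZero k] : traceCointegral k H 1 ≠ 0 := by
  obtain ⟨n, d, _, ⟨e⟩⟩ := IsSemisimpleRing.exists_algEquiv_pi_matrix_of_isAlgClosed k H
  let e' : H ≃ₐ[k] Π i, Module.End k (Fin (d i) → k) :=
    e.trans (AlgEquiv.piCongrRight fun i => Matrix.toLinAlgEquiv')
  obtain ⟨N, hN, hpow⟩ := exists_antipodeSq_pow_eq_one k H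
  have trace_ne_zero := trace_algEquiv_ne_zero (τ := e'.autCongr (antipodeSq k H)) hN
    (by rw [← map_pow, hpow, map_one])
    (χ := (Bialgebra.counitAlgHom k H).comp e'.symm.toAlgHom)
    fun x => by simp [antipodeSq_apply, counit_antipode]
  have conj : (e'.autCongr (antipodeSq k H)).toLinearMap =
      e'.toLinearEquiv.conj (antipode k ∘ₗ antipode k) := rfl
  rw [conj, LinearMap.trace_conj'] at trace_ne_zero
  rwa [traceCointegral_apply, LinearMap.mulRight_one, LinearMap.id_comp]

/-- The integral on `H` normalized by `haar 1 = 1`. -/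
noncomputable def haar : H →ₗ[k] k :=
  (traceCointegral k H 1)⁻¹ • traceCointegral k H

/-- The bilinear form `(x, y) ↦ haar (S(x) y)`. For it, distinct simple subcoalgebras are
orthogonal. -/
noncomputable def haarForm : H →ₗ[k] H →ₗ[k] k :=
  (LinearMap.mul k H).compr₂ (haar k H) ∘ₗ antipode k

variable {k H}

theorem haarForm_apply (x y : H) : haarForm k H x y = haar k H (antipode k x * y) :=
  rfl

variable [FiniteDimensional k H]

theorem haar_mul (h y : H) : haar k H (h * y) = haar k H (antipode k (antipode k y) * h) := by
  rw [haar, LinearMap.smul_apply, LinearMap.smul_apply, traceCointegral_mul]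

theorem isRightCointegral_haar : IsRightCointegral (haar k H) :=
  isRightCointegral_traceCointegral.smul _

theorem contractL_haarForm_comul (x y : H) :
    contractL (haarForm k H x) (comul y) = contractR ((haarForm k H).flip y) (comul x) := by
  have haarForm_eq : haarForm k H x = haar k H ∘ₗ LinearMap.mulLeft k (antipode k x) := rfl
  rw [haarForm_eq, ← contractL_tmul_one_mul, ← sum_one_tmul_mul_comul_antipode (ℛ k x),
    Finset.sum_mul, map_sum]
  conv_rhs => rw [← (ℛ k x).eq]
  simp only [mul_assoc, contractL_one_tmul_mul, ← Bialgebra.comul_mul, isRightCointegral_haar _,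
    map_sum, contractR_tmul, LinearMap.flip_apply, haarForm_apply, mul_smul_comm, mul_one]

theorem haarForm_contractR (q : H →ₗ[k] k) (x y : H) :
    haarForm k H x (contractR q (comul y)) = haarForm k H (contractL q (comul x)) y := by
  rw [← apply_contractL, contractL_haarForm_comul, ← LinearMap.flip_apply, apply_contractL]

theorem haarForm_mul_right (x y a : H) :
    haarForm k H x (y * a) = haarForm k H (x * antipode k a) y := by
  rw [haarForm_apply, haarForm_apply, ← mul_assoc, haar_mul, antipode_mul_antidistrib, mul_assoc]

variable [IsSemisimpleRing H] [IsAlgClosed k] [CharZero k]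

variable (k H) in
theorem haar_one : haar k H 1 = 1 :=
  inv_mul_cancel₀ (traceCointegral_one_ne_zero k H)

theorem haar_antipode (h : H) : haar k H (antipode k h) = haar k H h := by
  have := apply_contractL (haar k H) (haar k H ∘ₗ antipode k) (comul h)
  rw [isRightCointegral_haar.comp_antipode, isRightCointegral_haar] at this
  simpa [haar_one] using this.symm

theorem isLeftCointegral_haar : IsLeftCointegral (haar k H) := by
  have haar_comp : haar k H ∘ₗ antipode k = haar k H := LinearMap.ext haar_antipode
  exact haar_comp ▸ isRightCointegral_haar.comp_antipode

theorem haarForm_contractL (q : H →ₗ[k] k) (x y : H) :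
    haarForm k H x (contractL q (comul y)) =
      haarForm k H (contractR (q ∘ₗ antipode k ∘ₗ antipode k) (comul x)) y := by
  rw [haarForm_apply, ← contractL_one_tmul_mul, apply_contractL,
    ← sum_antipode_antipode_tmul_one_mul_comul (ℛ k x), Finset.sum_mul, map_sum, map_sum]
  conv_rhs => rw [← (ℛ k x).eq]
  simp only [mul_assoc, contractR_tmul_one_mul, ← Bialgebra.comul_mul, isLeftCointegral_haar _,
    map_sum, contractR_tmul, LinearMap.sum_apply, map_smul, LinearMap.smul_apply, haarForm_apply,
    mul_smul_comm, mul_one, LinearMap.comp_apply, smul_eq_mul, mul_comm]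

end Haar

section Subcoalgebra

open Coalgebra HopfAlgebra

section TensorSquare

variable {R V W P : Type*} [CommSemiring R] [AddCommMonoid V] [Module R V] [AddCommMonoid W]
  [Module R W] [AddCommMonoid P] [Module R P]

theorem apply_mem_of_mem_range_map_subtype {C : Submodule R V} {D : Submodule R W}
    {Q : Submodule R P} {φ : V ⊗[R] W →ₗ[R] P} (h : ∀ x ∈ C, ∀ y ∈ D, φ (x ⊗ₜ y) ∈ Q)
    {u : V ⊗[R] W} (hu : u ∈ LinearMap.range (TensorProduct.map C.subtype D.subtype)) :
    φ u ∈ Q := by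
  obtain ⟨v, rfl⟩ := hu
  induction v with
  | zero => simp only [map_zero, zero_mem]
  | add v w hv hw => simpa only [map_add] using add_mem hv hw
  | tmul x y => exact h x x.2 y y.2

theorem contractL_mem {C : Submodule R V} {D : Submodule R W} {u : V ⊗[R] W}
    (hu : u ∈ LinearMap.range (TensorProduct.map C.subtype D.subtype)) (p : V →ₗ[R] R) :
    contractL p u ∈ D :=
  apply_mem_of_mem_range_map_subtype (fun _ _ y hy => by simpa using D.smul_mem _ hy) hu

theorem contractR_mem {C : Submodule R V} {D : Submodule R W} {u : V ⊗[R] W}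
    (hu : u ∈ LinearMap.range (TensorProduct.map C.subtype D.subtype)) (p : W →ₗ[R] R) :
    contractR p u ∈ C :=
  apply_mem_of_mem_range_map_subtype (fun x hx _ _ => by simpa using C.smul_mem _ hx) hu

theorem tmul_mem_range_map_subtype {C : Submodule R V} {D : Submodule R W} {x : V} {y : W}
    (hx : x ∈ C) (hy : y ∈ D) :
    x ⊗ₜ y ∈ LinearMap.range (TensorProduct.map C.subtype D.subtype) :=
  ⟨⟨x, hx⟩ ⊗ₜ ⟨y, hy⟩, rfl⟩

theorem range_map_subtype_mono {C C' : Submodule R V} {D D' : Submodule R W} (hC : C ≤ C')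
    (hD : D ≤ D') : LinearMap.range (TensorProduct.map C.subtype D.subtype) ≤
      LinearMap.range (TensorProduct.map C'.subtype D'.subtype) := fun _ hu =>
  apply_mem_of_mem_range_map_subtype (φ := LinearMap.id)
    (fun _ hx _ hy => tmul_mem_range_map_subtype (hC hx) (hD hy)) hu

theorem eq_of_forall_contractL_eq [Module.Free R V] {u v : V ⊗[R] W}
    (h : ∀ p : V →ₗ[R] R, contractL p u = contractL p v) : u = v := by
  let b := Module.Free.chooseBasis R V
  refine (TensorProduct.equivFinsuppOfBasisLeft b).injective (Finsupp.ext fun i => ?_)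
  rw [TensorProduct.equivFinsuppOfBasisLeft_apply, TensorProduct.equivFinsuppOfBasisLeft_apply]
  exact h (b.coord i)

theorem eq_of_forall_contractR_eq [Module.Free R W] {u v : V ⊗[R] W}
    (h : ∀ p : W →ₗ[R] R, contractR p u = contractR p v) : u = v := by
  let b := Module.Free.chooseBasis R W
  refine (TensorProduct.equivFinsuppOfBasisRight b).injective (Finsupp.ext fun i => ?_)
  rw [TensorProduct.equivFinsuppOfBasisRight_apply, TensorProduct.equivFinsuppOfBasisRight_apply]
  exact h (b.coord i)

theorem mem_range_map_subtype {k V W : Type*} [Field k] [AddCommGroup V] [Module k V]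
    [AddCommGroup W] [Module k W] {C : Submodule k V} {D : Submodule k W} {u : V ⊗[k] W}
    (hL : ∀ p, contractL p u ∈ D) (hR : ∀ p, contractR p u ∈ C) :
    u ∈ LinearMap.range (TensorProduct.map C.subtype D.subtype) := by
  obtain ⟨e, he⟩ := C.subtype.exists_leftInverse_of_injective C.ker_subtype
  obtain ⟨f, hf⟩ := D.subtype.exists_leftInverse_of_injective D.ker_subtype
  have rTensor_eq : LinearMap.rTensor W (C.subtype ∘ₗ e) u = u :=
    eq_of_forall_contractR_eq fun p => by
      rw [← map_contractR]
      exact congrArg Subtype.val (LinearMap.congr_fun he ⟨_, hR p⟩)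
  have lTensor_eq : LinearMap.lTensor V (D.subtype ∘ₗ f) u = u :=
    eq_of_forall_contractL_eq fun p => by
      rw [← map_contractL]
      exact congrArg Subtype.val (LinearMap.congr_fun hf ⟨_, hL p⟩)
  refine ⟨TensorProduct.map e f u, ?_⟩
  rw [← LinearMap.comp_apply, ← TensorProduct.map_comp, ← LinearMap.lTensor_comp_rTensor,
    LinearMap.comp_apply, rTensor_eq, lTensor_eq]

end TensorSquare

variable {k : Type} [Field k] {H : Type} [Ring H] [HopfAlgebra k H]

theorem IsSubcoalgebra.sSup {s : Set (Submodule k H)} (hs : ∀ C ∈ s, IsSubcoalgebra k H C) :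
    IsSubcoalgebra k H (sSup s) := by
  have : SupSet.sSup s ≤ (LinearMap.range (TensorProduct.map (SupSet.sSup s).subtype
      (SupSet.sSup s).subtype)).comap (comul (R := k)) :=
    sSup_le fun C hC c hc => range_map_subtype_mono (le_sSup hC) (le_sSup hC) (hs C hC c hc)
  exact this

theorem IsSubcoalgebra.mul {C D : Submodule k H} (hC : IsSubcoalgebra k H C)
    (hD : IsSubcoalgebra k H D) : IsSubcoalgebra k H (C * D) := by
  have : C * D ≤ (LinearMap.range (TensorProduct.map (C * D).subtype
      (C * D).subtype)).comap (comul (R := k)) := by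
    refine Submodule.mul_le.mpr fun x hx y hy => ?_
    rw [Submodule.mem_comap, Bialgebra.comul_mul]
    refine apply_mem_of_mem_range_map_subtype (φ := LinearMap.mulRight k _)
      (fun a ha b hb => ?_) (hC x hx)
    refine apply_mem_of_mem_range_map_subtype (φ := LinearMap.mulLeft k (a ⊗ₜ b))
      (fun c hc d hd => ?_) (hD y hy)
    rw [LinearMap.mulLeft_apply, Algebra.TensorProduct.tmul_mul_tmul]
    exact tmul_mem_range_map_subtype (Submodule.mul_mem_mul ha hc) (Submodule.mul_mem_mul hb hd)
  exact this

theorem IsSubcoalgebra.inf {C D : Submodule k H} (hC : IsSubcoalgebra k H C)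
    (hD : IsSubcoalgebra k H D) : IsSubcoalgebra k H (C ⊓ D) := fun c hc =>
  mem_range_map_subtype
    (fun p => ⟨contractL_mem (hC c hc.1) p, contractL_mem (hD c hc.2) p⟩)
    (fun p => ⟨contractR_mem (hC c hc.1) p, contractR_mem (hD c hc.2) p⟩)

theorem IsSimpleSubcoalgebra.le_or_disjoint {C Y : Submodule k H}
    (hC : IsSimpleSubcoalgebra k H C) (hY : IsSubcoalgebra k H Y) : C ≤ Y ∨ Disjoint C Y := by
  rw [disjoint_iff, or_iff_not_imp_right]
  exact fun h => inf_eq_left.mp (hC.2.2 _ inf_le_left (hC.1.inf hY) h)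

/-- The orthogonal complement of a subspace for `haarForm`. -/
noncomputable def haarOrth (X : Submodule k H) : Submodule k H :=
  ⨅ x ∈ X, LinearMap.ker (haarForm k H x)

theorem mem_haarOrth {X : Submodule k H} {y : H} :
    y ∈ haarOrth X ↔ ∀ x ∈ X, haarForm k H x y = 0 := by
  simp only [haarOrth, Submodule.mem_iInf, LinearMap.mem_ker]

variable [FiniteDimensional k H]

theorem IsSubcoalgebra.exists_isSimpleSubcoalgebra_le {Y : Submodule k H}
    (hY : IsSubcoalgebra k H Y) (h0 : Y ≠ ⊥) : ∃ C ≤ Y, IsSimpleSubcoalgebra k H C := by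
  obtain ⟨C, ⟨hCY, hC, hC0⟩, hmin⟩ := (wellFounded_lt (α := Submodule k H)).has_min
    {C | C ≤ Y ∧ IsSubcoalgebra k H C ∧ C ≠ ⊥} ⟨Y, le_rfl, hY, h0⟩
  exact ⟨C, hCY, hC, hC0, fun D hDC hD hD0 =>
    hDC.eq_of_not_lt (hmin D ⟨hDC.trans hCY, hD, hD0⟩)⟩

/- The contraction of `Δ y` against `x` lies in `C` and in `D`, and its counit is the value of the
form. -/
theorem haarForm_eq_zero_of_disjoint {C D : Submodule k H} (hC : IsSubcoalgebra k H C)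
    (hD : IsSubcoalgebra k H D) (h : Disjoint C D) {x y : H} (hx : x ∈ C) (hy : y ∈ D) :
    haarForm k H x y = 0 := by
  have contract_eq_zero : contractL (haarForm k H x) (comul y) = 0 := by
    refine Submodule.disjoint_def.mp h _ ?_ (contractL_mem (hD y hy) _)
    rw [contractL_haarForm_comul]
    exact contractR_mem (hC x hx) _
  rw [← contractR_counit_comul (R := k) y, ← apply_contractL, contract_eq_zero, map_zero]

variable [IsSemisimpleRing H] [CharZero k] [IsAlgClosed k]

theorem lift_haarForm_comul (z : H) :
    TensorProduct.lift (haarForm k H) (comul z) = counit (R := k) z := by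
  have lift_eq : TensorProduct.lift (haarForm k H) =
      haar k H ∘ₗ LinearMap.mul' k H ∘ₗ LinearMap.rTensor H (antipode k) := by
    ext x y; simp [haarForm_apply]
  rw [lift_eq, LinearMap.comp_apply, LinearMap.comp_apply, mul_antipode_rTensor_comul_apply,
    Algebra.algebraMap_eq_smul_one, map_smul, haar_one, smul_eq_mul, mul_one]

/- The counit vanishes on a subcoalgebra which is totally isotropic for the form. -/
theorem disjoint_of_haarForm_eq_zero {C D : Submodule k H} (hC : IsSubcoalgebra k H C)
    (hD : IsSubcoalgebra k H D) (h : ∀ x ∈ C, ∀ y ∈ D, haarForm k H x y = 0) : Disjoint C D := by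
  have hCD := hC.inf hD
  have counit_eq_zero (z) (hz : z ∈ C ⊓ D) : counit (R := k) z = 0 := by
    rw [← lift_haarForm_comul, ← Submodule.mem_bot k]
    exact apply_mem_of_mem_range_map_subtype (C := C ⊓ D) (D := C ⊓ D)
      (fun x hx y hy => h x hx.1 y hy.2) (hCD z hz)
  refine disjoint_iff_inf_le.mpr fun z hz => ?_
  rw [← contractR_counit_comul (R := k) z]
  refine apply_mem_of_mem_range_map_subtype (fun x _ y hy => ?_) (hCD z hz)
  rw [contractR_tmul, counit_eq_zero y hy, zero_smul]
  exact zero_mem _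

theorem IsSubcoalgebra.orth {X : Submodule k H} (hX : IsSubcoalgebra k H X) :
    IsSubcoalgebra k H (haarOrth X) := fun y hy => by
  rw [mem_haarOrth] at hy
  refine mem_range_map_subtype (fun p => mem_haarOrth.mpr fun x hx => ?_)
    (fun p => mem_haarOrth.mpr fun x hx => ?_)
  · rw [haarForm_contractL]
    exact hy _ (contractR_mem (hX x hx) _)
  · rw [haarForm_contractR]
    exact hy _ (contractL_mem (hX x hx) _)

theorem IsSubcoalgebra.isCompl_haarOrth {X : Submodule k H} (hX : IsSubcoalgebra k H X) :
    IsCompl X (haarOrth X) := by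
  have disjoint := disjoint_of_haarForm_eq_zero hX hX.orth fun x hx y hy => mem_haarOrth.mp hy x hx
  refine ⟨disjoint, codisjoint_iff.mpr (eq_top_iff.mpr fun h _ => ?_)⟩
  let T : H →ₗ[k] Module.Dual k X := (haarForm k H ∘ₗ X.subtype).flip
  have injective : Function.Injective (T ∘ₗ X.subtype) := by
    rw [injective_iff_map_eq_zero]
    exact fun x hx => Subtype.ext <| Submodule.disjoint_def.mp disjoint x x.2 <|
      mem_haarOrth.mpr fun y hy => LinearMap.congr_fun hx ⟨y, hy⟩
  obtain ⟨x, hx⟩ := (LinearMap.injective_iff_surjective_of_finrank_eq_finrank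
    (Subspace.dual_finrank_eq (K := k) (V := X)).symm).mp injective (T h)
  refine Submodule.mem_sup.mpr ⟨x, x.2, h - x, mem_haarOrth.mpr fun y hy => ?_, add_sub_cancel _ _⟩
  rw [map_sub, sub_eq_zero]
  exact (LinearMap.congr_fun hx ⟨y, hy⟩).symm

variable (k H) in
theorem sSup_isSimpleSubcoalgebra_eq_top :
    sSup {C : Submodule k H | IsSimpleSubcoalgebra k H C} = ⊤ := by
  set X := sSup {C : Submodule k H | IsSimpleSubcoalgebra k H C}
  have hs : IsSubcoalgebra k H X := IsSubcoalgebra.sSup fun C hC => hC.1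
  have haarOrth_eq_bot : haarOrth X = ⊥ := by
    by_contra h0
    obtain ⟨C, hC, hCs⟩ := hs.orth.exists_isSimpleSubcoalgebra_le h0
    exact hCs.2.1 (le_bot_iff.mp (hs.isCompl_haarOrth.disjoint (le_sSup hCs) hC))
  simpa only [haarOrth_eq_bot, sup_bot_eq] using hs.isCompl_haarOrth.sup_eq_top

end Subcoalgebra

section RightStable

variable {k : Type} [Field k] {H : Type} [Ring H] [HopfAlgebra k H] {K : Subalgebra k H}
  {X C D : Submodule k H}

variable (K) in
/-- The subspace `X` is a union of right cosets of `K`, that is, `XK ⊆ X`. -/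
def IsRightStable (X : Submodule k H) : Prop :=
  ∀ ⦃x⦄, x ∈ X → ∀ ⦃a⦄, a ∈ K → x * a ∈ X

theorem isRightStable_toSubmodule : IsRightStable K K.toSubmodule :=
  fun _ hx _ ha => K.mul_mem hx ha

theorem isRightStable_CKsub (C : Submodule k H) : IsRightStable K (CKsub k H K C) := by
  have CKsub_mul : CKsub k H K C * K.toSubmodule = CKsub k H K C := by
    rw [CKsub, mul_assoc, K.isIdempotentElem_toSubmodule.eq]
  exact fun x hx a ha => CKsub_mul ▸ Submodule.mul_mem_mul hx ha

theorem le_CKsub (C : Submodule k H) : C ≤ CKsub k H K C := fun x hx =>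
  mul_one x ▸ Submodule.mul_mem_mul hx K.one_mem

theorem IsRightStable.CKsub_le (hX : IsRightStable K X) (h : C ≤ X) : CKsub k H K C ≤ X :=
  Submodule.mul_le.mpr fun _ hx _ ha => hX (h hx) ha

theorem IsHopfSubalgebra.isSubcoalgebra_CKsub (hK : IsHopfSubalgebra k H K)
    (hC : IsSubcoalgebra k H C) : IsSubcoalgebra k H (CKsub k H K C) :=
  hC.mul hK.1

theorem IsRightStable.orth [FiniteDimensional k H] (hX : IsRightStable K X)
    (hK : IsHopfSubalgebra k H K) : IsRightStable K (haarOrth X) := fun y hy a ha =>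
  mem_haarOrth.mpr fun x hx => by
    rw [haarForm_mul_right]
    exact mem_haarOrth.mp hy _ (hX hx (hK.2 a ha))

variable (K) in
theorem exists_isDoubleCosetReps_bot :
    ∃ (ι : Type) (rep : ι → Submodule k H), IsDoubleCosetReps k H ⊥ K rep := by
  let cosets := {Y : Submodule k H | ∃ C, IsSimpleSubcoalgebra k H C ∧ CKsub k H K C = Y}
  choose rep simple_rep CKsub_rep using fun Y : cosets => Y.2
  refine ⟨cosets, rep, simple_rep, fun Y Z h => ?_, fun C hC => ⟨⟨_, C, hC, rfl⟩, ?_⟩⟩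
  · rw [Algebra.toSubmodule_bot, one_mul, one_mul] at h
    exact Subtype.ext (CKsub_rep Y ▸ CKsub_rep Z ▸ h)
  · rw [Algebra.toSubmodule_bot, one_mul]
    exact (le_CKsub C).trans (CKsub_rep ⟨_, C, hC, rfl⟩).ge

end RightStable

section LeftStable

open Coalgebra HopfAlgebra

variable {k : Type} [Field k] {H : Type} [Ring H] [HopfAlgebra k H] {K : Subalgebra k H}

theorem adActR_apply (h x : H) : adActR k H h x =
    LinearMap.mul' k H (LinearMap.rTensor H (LinearMap.mulRight k x)
      (LinearMap.rTensor H (antipode k) (comul h))) := by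
  rw [adActR, LinearMap.comp_apply, ← (ℛ k h).eq]
  simp only [map_sum, LinearMap.sum_apply, TensorProduct.lift.tmul, LinearMap.mk₂_apply,
    LinearMap.rTensor_tmul, LinearMap.comp_apply, LinearMap.mulRight_apply,
    LinearMap.mulLeft_apply, LinearMap.mul'_apply]

theorem mul_adActR (b c a : H) : b * adActR k H c a =
    LinearMap.mul' k H (LinearMap.rTensor H (LinearMap.mulRight k a)
      ((b ⊗ₜ 1) * LinearMap.rTensor H (antipode k) (comul c))) := by
  rw [adActR_apply]
  induction LinearMap.rTensor H (antipode k) (comul (R := k) c) with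
  | zero => simp only [map_zero, mul_zero]
  | add u v hu hv => simp only [map_add, mul_add, hu, hv]
  | tmul u v => simp [mul_assoc]

theorem mul'_lTensor_adActR_comul (a y : H) :
    LinearMap.mul' k H (LinearMap.lTensor H ((adActR k H).flip a) (comul y)) = a * y := by
  rw [← (ℛ k y).eq]
  simp only [map_sum, LinearMap.lTensor_tmul, LinearMap.flip_apply, LinearMap.mul'_apply,
    mul_adActR]
  rw [← map_sum, ← map_sum, sum_tmul_one_mul_rTensor_antipode_comul]
  simp

theorem IsNormalHopfSubalgebra.mul_mem (hK : IsNormalHopfSubalgebra k H K) {X : Submodule k H}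
    (hX : IsSubcoalgebra k H X) (hXK : IsRightStable K X) {a y : H} (ha : a ∈ K) (hy : y ∈ X) :
    a * y ∈ X := by
  rw [← mul'_lTensor_adActR_comul (k := k), ← LinearMap.comp_apply]
  refine apply_mem_of_mem_range_map_subtype (fun b hb c _ => ?_) (hX y hy)
  exact hXK hb (hK.2 c a ha).2

end LeftStable

section Cosets

variable {k : Type} [Field k] [CharZero k] [IsAlgClosed k] {H : Type} [Ring H] [HopfAlgebra k H]
  [FiniteDimensional k H] [IsSemisimpleRing H] {K : Subalgebra k H} {X C D : Submodule k H}

theorem IsSimpleSubcoalgebra.le_or_disjoint_CKsub (hC : IsSimpleSubcoalgebra k H C)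
    (hK : IsHopfSubalgebra k H K) (hX : IsSubcoalgebra k H X) (hXK : IsRightStable K X) :
    C ≤ X ∨ Disjoint (CKsub k H K C) X := by
  refine (hC.le_or_disjoint hX).imp_right fun h => ?_
  have CKsub_le_haarOrth : CKsub k H K C ≤ haarOrth X := (hXK.orth hK).CKsub_le fun x hx =>
    mem_haarOrth.mpr fun y hy => haarForm_eq_zero_of_disjoint hX hC.1 h.symm hy hx
  exact hX.isCompl_haarOrth.disjoint.symm.mono_left CKsub_le_haarOrth

theorem IsSimpleSubcoalgebra.CKsub_eq_or_disjoint (hC : IsSimpleSubcoalgebra k H C)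
    (hD : IsSimpleSubcoalgebra k H D) (hK : IsHopfSubalgebra k H K) :
    CKsub k H K C = CKsub k H K D ∨ Disjoint (CKsub k H K C) (CKsub k H K D) := by
  rcases hC.le_or_disjoint_CKsub hK (hK.isSubcoalgebra_CKsub hD.1) (isRightStable_CKsub D) with
    hCD | hCD
  · rcases hD.le_or_disjoint_CKsub hK (hK.isSubcoalgebra_CKsub hC.1) (isRightStable_CKsub C) with
      hDC | hDC
    · exact .inl <| le_antisymm ((isRightStable_CKsub D).CKsub_le hCD)
        ((isRightStable_CKsub C).CKsub_le hDC)
    · exact .inr hDC.symm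
  · exact .inr hCD

theorem IsSimpleSubcoalgebra.disjoint_of_not_le (hC : IsSimpleSubcoalgebra k H C)
    (hK : IsHopfSubalgebra k H K) (h : ¬ C ≤ K.toSubmodule) :
    Disjoint (CKsub k H K C) K.toSubmodule :=
  (hC.le_or_disjoint_CKsub hK hK.1 isRightStable_toSubmodule).resolve_left h

section Representatives

variable {ι : Type} {rep : ι → Submodule k H}

theorem IsDoubleCosetReps.disjoint_CKsub (hrep : IsDoubleCosetReps k H ⊥ K rep)
    (hK : IsHopfSubalgebra k H K) {i j : ι} (hij : i ≠ j) :
    Disjoint (CKsub k H K (rep i)) (CKsub k H K (rep j)) :=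
  ((hrep.1 i).CKsub_eq_or_disjoint (hrep.1 j) hK).resolve_left fun h =>
    hij (hrep.2.1 i j (by rwa [Algebra.toSubmodule_bot, one_mul, one_mul]))

theorem IsDoubleCosetReps.iSup_CKsub (hrep : IsDoubleCosetReps k H ⊥ K rep) :
    ⨆ i, CKsub k H K (rep i) = ⊤ := by
  rw [eq_top_iff, ← sSup_isSimpleSubcoalgebra_eq_top]
  refine sSup_le fun C hC => ?_
  obtain ⟨i, hi⟩ := hrep.2.2 C hC
  rw [Algebra.toSubmodule_bot, one_mul] at hi
  exact hi.trans (le_iSup (fun i => CKsub k H K (rep i)) i)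

end Representatives

end Cosets

section Projection

variable {k : Type} [Field k] [CharZero k] [IsAlgClosed k] {H : Type} [Ring H] [HopfAlgebra k H]
  [FiniteDimensional k H] [IsSemisimpleRing H] {K : Subalgebra k H} {X Y : Submodule k H}

/-- The projection of `H` onto a subcoalgebra along its orthogonal complement for `haarForm`. -/
noncomputable def IsSubcoalgebra.projection (hX : IsSubcoalgebra k H X) : H →ₗ[k] X :=
  X.projectionOnto (haarOrth X) hX.isCompl_haarOrth

theorem IsSubcoalgebra.projection_coe (hX : IsSubcoalgebra k H X) (x : X) :
    hX.projection x = x :=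
  Submodule.projectionOnto_apply_left _ x

theorem IsSubcoalgebra.projection_eq_zero (hX : IsSubcoalgebra k H X) (hY : IsSubcoalgebra k H Y)
    (h : Disjoint X Y) {y : H} (hy : y ∈ Y) : hX.projection y = 0 :=
  (Submodule.projectionOnto_apply_eq_zero_iff _).mpr <| mem_haarOrth.mpr fun _ hx =>
    haarForm_eq_zero_of_disjoint hX hY h hx hy

theorem IsSubcoalgebra.projection_map (hX : IsSubcoalgebra k H X) {T : H →ₗ[k] H}
    (hT : ∀ x ∈ X, T x ∈ X) (hTo : ∀ y ∈ haarOrth X, T y ∈ haarOrth X) (h : H) :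
    (hX.projection (T h) : H) = T (hX.projection h) := by
  obtain ⟨x, hx, y, hy, rfl⟩ := Submodule.mem_sup.mp
    (hX.isCompl_haarOrth.sup_eq_top.ge (Submodule.mem_top (x := h)))
  simp only [projection, map_add, Submodule.projectionOnto_apply_of_mem_left _ hx,
    Submodule.projectionOnto_apply_of_mem_left _ (hT x hx),
    Submodule.projectionOnto_apply_of_mem_right _ hy,
    Submodule.projectionOnto_apply_of_mem_right _ (hTo y hy), add_zero]

theorem IsSubcoalgebra.projection_mul_right (hX : IsSubcoalgebra k H X)
    (hK : IsHopfSubalgebra k H K) (hXK : IsRightStable K X) (h : H) (a : K) :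
    (hX.projection (h * a) : H) = hX.projection h * a :=
  hX.projection_map (T := LinearMap.mulRight k (a : H)) (fun _ hx => hXK hx a.2)
    (fun _ hy => hXK.orth hK hy a.2) h

theorem IsSubcoalgebra.projection_mul_left (hX : IsSubcoalgebra k H X)
    (hK : IsNormalHopfSubalgebra k H K) (hXK : IsRightStable K X) (a : K) (h : H) :
    (hX.projection (a * h) : H) = a * hX.projection h :=
  hX.projection_map (T := LinearMap.mulLeft k (a : H)) (fun _ hx => hK.mul_mem hX hXK a.2 hx)
    (fun _ hy => hK.mul_mem hX.orth (hXK.orth hK.1) a.2 hy) h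

end Projection

section Induced

variable {k : Type} [Field k] {H : Type} [Ring H] [HopfAlgebra k H] {K : Subalgebra k H}
  {M N : Type*} [AddCommGroup M] [Module k M] [Module K M] [AddCommGroup N] [Module k N]

variable (K M) in
/-- The class of `h ⊗ m` in the induced module, bilinear in `h` and `m`. -/
noncomputable def indMk : H →ₗ[k] M →ₗ[k] Ind k H K M :=
  (TensorProduct.mk k H M).compr₂ ((indRel k H K M).mkQ.restrictScalars k)

theorem smul_indMk (h' h : H) (m : M) : h' • indMk K M h m = indMk K M (h' * h) m :=
  rfl

theorem smul_indMk_one (h : H) (m : M) : h • indMk K M 1 m = indMk K M h m := by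
  rw [smul_indMk, mul_one]

theorem indMk_one_smul (a : K) (m : M) : indMk K M 1 (a • m) = (a : H) • indMk K M 1 m := by
  rw [smul_indMk_one, eq_comm]
  exact (Submodule.Quotient.eq (indRel k H K M)).mpr (Submodule.subset_span ⟨a, m, rfl⟩)

theorem indMk_mul (h : H) (a : K) (m : M) : indMk K M (h * a) m = indMk K M h (a • m) := by
  rw [← smul_indMk_one h, indMk_one_smul, smul_smul, smul_indMk_one]

theorem map₂_indMk_top : Submodule.map₂ (indMk K M) (⊤ : Submodule k H) ⊤ = ⊤ := by
  refine Submodule.eq_top_iff'.mpr fun z => ?_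
  obtain ⟨u, rfl⟩ := Submodule.Quotient.mk_surjective _ z
  induction u with
  | zero => exact zero_mem _
  | add u v hu hv => exact add_mem hu hv
  | tmul h m => exact Submodule.apply_mem_map₂ (indMk K M) Submodule.mem_top Submodule.mem_top

theorem Ind.hom_ext {f g : Ind k H K M →ₗ[k] N}
    (h : ∀ x m, f (indMk K M x m) = g (indMk K M x m)) : f = g := by
  rw [← LinearMap.eqLocus_eq_top, eq_top_iff, ← map₂_indMk_top, Submodule.map₂_le]
  exact fun x _ m _ => h x m

theorem nontrivial_of_nontrivial_ind [Nontrivial (Ind k H K M)] : Nontrivial M := by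
  by_contra hM
  rw [not_nontrivial_iff_subsingleton] at hM
  refine (one_ne_zero : (1 : Module.End k (Ind k H K M)) ≠ 0) (Ind.hom_ext fun h m => ?_)
  rw [Subsingleton.elim m 0, map_zero, map_zero, map_zero]

section Lift

variable (F : H →ₗ[k] M →ₗ[k] N)

theorem indRel_le_ker_lift (hF : ∀ h (a : K) m, F (h * a) m = F h (a • m)) :
    (indRel k H K M).restrictScalars k ≤ LinearMap.ker (TensorProduct.lift F) := by
  intro z hz
  suffices ∀ h : H, TensorProduct.lift F (h • z) = 0 by simpa using this 1
  rw [Submodule.restrictScalars_mem, indRel] at hz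
  induction hz using Submodule.span_induction with
  | mem z hz =>
    obtain ⟨a, m, rfl⟩ := hz
    intro h
    simp [smul_sub, TensorProduct.smul_tmul', hF]
  | zero => simp
  | add z w _ _ hz hw => intro h; rw [smul_add, map_add, hz, hw, add_zero]
  | smul h' z _ hz => intro h; rw [smul_smul, hz]

/-- The map out of the induced module given by a `K`-balanced bilinear map. -/
noncomputable def Ind.lift (hF : ∀ h (a : K) m, F (h * a) m = F h (a • m)) :
    Ind k H K M →ₗ[k] N :=
  ((indRel k H K M).restrictScalars k).liftQ _ (indRel_le_ker_lift F hF) ∘ₗ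
    (Submodule.Quotient.restrictScalarsEquiv k (indRel k H K M)).symm.toLinearMap

variable {F} {hF : ∀ h (a : K) m, F (h * a) m = F h (a • m)}

theorem Ind.lift_indMk (h : H) (m : M) : Ind.lift F hF (indMk K M h m) = F h m :=
  TensorProduct.lift.tmul h m

theorem Ind.lift_smul {a : H} {b : N →ₗ[k] N} (hab : ∀ h m, F (a * h) m = b (F h m))
    (z : Ind k H K M) : Ind.lift F hF (a • z) = b (Ind.lift F hF z) := by
  suffices Ind.lift F hF ∘ₗ Algebra.lsmul k k _ a = b ∘ₗ Ind.lift F hF from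
    LinearMap.congr_fun this z
  refine Ind.hom_ext fun h m => ?_
  simp only [LinearMap.comp_apply, Algebra.lsmul_coe, smul_indMk, Ind.lift_indMk, hab]

end Lift

section Frobenius

variable [Module H N] [IsScalarTower k H N]

theorem Ind.hom_ext_one {f g : Ind k H K M →ₗ[H] N}
    (h : ∀ m, f (indMk K M 1 m) = g (indMk K M 1 m)) : f = g := by
  refine LinearMap.restrictScalars_injective k (Ind.hom_ext fun x m => ?_)
  simp only [LinearMap.restrictScalars_apply, ← smul_indMk_one x, map_smul, h]

/-- Frobenius reciprocity: the `H`-linear extension to the induced module of a `K`-linear map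
from `M` to an `H`-module. -/
noncomputable def Ind.extend (f : M →ₗ[k] N) (hf : ∀ (a : K) m, f (a • m) = (a : H) • f m) :
    Ind k H K M →ₗ[H] N where
  __ := Ind.lift ((Algebra.lsmul k k N).toLinearMap.compl₂ f) fun h a m => by simp [hf]
  map_smul' h z := Ind.lift_smul (b := Algebra.lsmul k k N h) (fun h' m => by simp) z

theorem Ind.extend_indMk (f : M →ₗ[k] N) (hf : ∀ (a : K) m, f (a • m) = (a : H) • f m) (h : H)
    (m : M) : Ind.extend f hf (indMk K M h m) = h • f m :=
  Ind.lift_indMk (hF := fun h a m => by simp [hf]) h m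

end Frobenius

end Induced

section Conjugate

variable {k : Type} [Field k] {H : Type} [Ring H] [HopfAlgebra k H] {K : Subalgebra k H}
  {M N : Type*} [AddCommGroup M] [Module k M] [Module K M] [AddCommGroup N] [Module k N]
  {C D : Submodule k H}

variable (K M C) in
/-- The class of `x ⊗ m` in the conjugate module, bilinear in `x` and `m`. -/
noncomputable def conjMk : CKsub k H K C →ₗ[k] M →ₗ[k] ConjM k H K M C :=
  (TensorProduct.mk k (CKsub k H K C) M).compr₂ (conjRel k H K M C).mkQ

theorem conjMk_mul (x : CKsub k H K C) (a : K) (m : M) :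
    conjMk K M C ⟨x * a, isRightStable_CKsub C x.2 a.2⟩ m = conjMk K M C x (a • m) :=
  (Submodule.Quotient.eq _).mpr (Submodule.subset_span ⟨x, a, m, _, rfl⟩)

theorem ConjM.hom_ext {f g : ConjM k H K M C →ₗ[k] N}
    (h : ∀ x m, f (conjMk K M C x m) = g (conjMk K M C x m)) : f = g :=
  Submodule.linearMap_qext _ (TensorProduct.ext' h)

theorem conjRel_le_ker_lift_indMk : conjRel k H K M C ≤
    LinearMap.ker (TensorProduct.lift (indMk K M ∘ₗ (CKsub k H K C).subtype)) := by
  refine Submodule.span_le.mpr ?_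
  rintro _ ⟨x, a, m, hxa, rfl⟩
  exact LinearMap.sub_mem_ker_iff.mpr (indMk_mul (x : H) a m)

variable (K M C) in
/-- The map `x ⊗ m ↦ x ⊗ m` from the conjugate module to the induced module. -/
noncomputable def conjToInd : ConjM k H K M C →ₗ[k] Ind k H K M :=
  (conjRel k H K M C).liftQ _ conjRel_le_ker_lift_indMk

theorem conjToInd_conjMk (x : CKsub k H K C) (m : M) :
    conjToInd K M C (conjMk K M C x m) = indMk K M (x : H) m :=
  TensorProduct.lift.tmul (f' := indMk K M ∘ₗ (CKsub k H K C).subtype) x m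

theorem conjMsub_eq_map₂ (C : Submodule k H) :
    conjMsub k H K M C = Submodule.map₂ (indMk K M) (CKsub k H K C) ⊤ := by
  rw [Submodule.map₂_eq_span_image2, conjMsub]
  congr 1
  ext z
  simp only [Set.mem_ofPred_eq, Set.mem_image2, SetLike.mem_coe, Submodule.mem_top, true_and,
    exists_prop, eq_comm]
  rfl

theorem map₂_conjMk_top : Submodule.map₂ (conjMk K M C) ⊤ ⊤ = ⊤ := by
  refine Submodule.eq_top_iff'.mpr fun w => ?_
  obtain ⟨u, rfl⟩ := Submodule.Quotient.mk_surjective _ w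
  induction u using TensorProduct.induction_on with
  | zero => exact zero_mem _
  | add u v hu hv => exact add_mem hu hv
  | tmul x m => exact Submodule.apply_mem_map₂ (conjMk K M C) Submodule.mem_top Submodule.mem_top

theorem conjToInd_mem (w : ConjM k H K M C) : conjToInd K M C w ∈ conjMsub k H K M C := by
  suffices (⊤ : Submodule k (ConjM k H K M C)) ≤ (conjMsub k H K M C).comap (conjToInd K M C) from
    this Submodule.mem_top
  rw [← map₂_conjMk_top, Submodule.map₂_le]
  exact fun x _ m _ => Submodule.subset_span ⟨x, x.2, m, rfl⟩

variable [CharZero k] [IsAlgClosed k] [FiniteDimensional k H] [IsSemisimpleRing H]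

/-- The projection of the induced module onto the conjugate module, induced by the projection of
`H` onto the coset `CK`. -/
noncomputable def indToConj (M : Type*) [AddCommGroup M] [Module k M] [Module K M]
    (hK : IsHopfSubalgebra k H K) (hC : IsSubcoalgebra k H C) :
    Ind k H K M →ₗ[k] ConjM k H K M C :=
  Ind.lift (conjMk K M C ∘ₗ (hK.isSubcoalgebra_CKsub hC).projection) fun h a m => by
    rw [LinearMap.comp_apply, LinearMap.comp_apply, ← conjMk_mul]
    congr 2
    exact Subtype.ext (IsSubcoalgebra.projection_mul_right _ hK (isRightStable_CKsub C) h a)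

theorem indToConj_indMk (hK : IsHopfSubalgebra k H K) (hC : IsSubcoalgebra k H C) (h : H) (m : M) :
    indToConj M hK hC (indMk K M h m) =
      conjMk K M C ((hK.isSubcoalgebra_CKsub hC).projection h) m :=
  Ind.lift_indMk h m

theorem indToConj_conjToInd (hK : IsHopfSubalgebra k H K) (hC : IsSubcoalgebra k H C)
    (w : ConjM k H K M C) : indToConj M hK hC (conjToInd K M C w) = w := by
  suffices indToConj M hK hC ∘ₗ conjToInd K M C = LinearMap.id from LinearMap.congr_fun this w
  refine ConjM.hom_ext fun x m => ?_
  rw [LinearMap.comp_apply, conjToInd_conjMk, indToConj_indMk, IsSubcoalgebra.projection_coe,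
    LinearMap.id_apply]

theorem indToConj_conjToInd_of_disjoint (hK : IsHopfSubalgebra k H K) (hC : IsSubcoalgebra k H C)
    (hD : IsSubcoalgebra k H D) (hCD : Disjoint (CKsub k H K C) (CKsub k H K D))
    (w : ConjM k H K M D) : indToConj M hK hC (conjToInd K M D w) = 0 := by
  suffices indToConj M hK hC ∘ₗ conjToInd K M D = 0 from LinearMap.congr_fun this w
  refine ConjM.hom_ext fun x m => ?_
  rw [LinearMap.comp_apply, conjToInd_conjMk, indToConj_indMk,
    (hK.isSubcoalgebra_CKsub hC).projection_eq_zero (hK.isSubcoalgebra_CKsub hD) hCD x.2, map_zero,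
    LinearMap.zero_apply, LinearMap.zero_apply]

theorem conjToInd_indToConj_smul (hK : IsNormalHopfSubalgebra k H K) (hC : IsSubcoalgebra k H C)
    (a : K) (z : Ind k H K M) :
    conjToInd K M C (indToConj M hK.1 hC ((a : H) • z)) =
      (a : H) • conjToInd K M C (indToConj M hK.1 hC z) := by
  suffices (conjToInd K M C ∘ₗ indToConj M hK.1 hC) ∘ₗ Algebra.lsmul k k _ (a : H) =
      Algebra.lsmul k k _ (a : H) ∘ₗ conjToInd K M C ∘ₗ indToConj M hK.1 hC from
    LinearMap.congr_fun this z
  refine Ind.hom_ext fun h m => ?_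
  simp only [LinearMap.comp_apply, Algebra.lsmul_coe, smul_indMk, indToConj_indMk,
    conjToInd_conjMk, IsSubcoalgebra.projection_mul_left _ hK (isRightStable_CKsub C)]

end Conjugate

section Retraction

variable {k : Type} [Field k] [CharZero k] [IsAlgClosed k] {H : Type} [Ring H] [HopfAlgebra k H]
  [FiniteDimensional k H] [IsSemisimpleRing H] {K : Subalgebra k H} {C : Submodule k H}
  {M : Type*} [AddCommGroup M] [Module k M] [Module K M] [IsScalarTower k K M]

/-- The projection of `H` onto a Hopf subalgebra. -/
noncomputable def IsHopfSubalgebra.retraction (hK : IsHopfSubalgebra k H K) : H →ₗ[k] K :=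
  hK.1.projection

theorem IsHopfSubalgebra.retraction_coe (hK : IsHopfSubalgebra k H K) (a : K) :
    hK.retraction (a : H) = a :=
  hK.1.projection_coe a

theorem IsHopfSubalgebra.retraction_mul_right (hK : IsHopfSubalgebra k H K) (h : H) (a : K) :
    hK.retraction (h * a) = hK.retraction h * a :=
  Subtype.ext (hK.1.projection_mul_right hK isRightStable_toSubmodule h a)

theorem IsNormalHopfSubalgebra.retraction_mul_left (hK : IsNormalHopfSubalgebra k H K) (a : K)
    (h : H) : hK.1.retraction (a * h) = a * hK.1.retraction h :=
  Subtype.ext (hK.1.1.projection_mul_left hK isRightStable_toSubmodule a h)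

/-- The retraction `h ⊗ m ↦ hK.retraction h • m` of the induced module onto `M`. -/
noncomputable def indToSelf (M : Type*) [AddCommGroup M] [Module k M] [Module K M]
    [IsScalarTower k K M] (hK : IsHopfSubalgebra k H K) : Ind k H K M →ₗ[k] M :=
  Ind.lift ((Algebra.lsmul k k M).toLinearMap ∘ₗ hK.retraction) fun h a m => by
    simp only [LinearMap.comp_apply, hK.retraction_mul_right, AlgHom.toLinearMap_apply,
      Algebra.lsmul_coe, mul_smul]

theorem indToSelf_indMk (hK : IsHopfSubalgebra k H K) (h : H) (m : M) :
    indToSelf M hK (indMk K M h m) = hK.retraction h • m :=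
  Ind.lift_indMk h m

theorem indToSelf_indMk_one (hK : IsHopfSubalgebra k H K) (m : M) :
    indToSelf M hK (indMk K M 1 m) = m := by
  rw [indToSelf_indMk, ← OneMemClass.coe_one K, hK.retraction_coe, one_smul]

theorem indToSelf_smul (hK : IsNormalHopfSubalgebra k H K) (a : K) (z : Ind k H K M) :
    indToSelf M hK.1 ((a : H) • z) = a • indToSelf M hK.1 z :=
  Ind.lift_smul (b := Algebra.lsmul k k M a) (fun h m => by
    simp only [LinearMap.comp_apply, hK.retraction_mul_left, AlgHom.toLinearMap_apply,
      Algebra.lsmul_coe, mul_smul]) z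

theorem indToSelf_eq_zero (hK : IsHopfSubalgebra k H K) (hC : IsSimpleSubcoalgebra k H C)
    (hCK : ¬ C ≤ K.toSubmodule) {z : Ind k H K M} (hz : z ∈ conjMsub k H K M C) :
    indToSelf M hK z = 0 := by
  suffices conjMsub k H K M C ≤ LinearMap.ker (indToSelf M hK) from this hz
  rw [conjMsub_eq_map₂, Submodule.map₂_le]
  intro x hx m _
  have retraction_eq_zero : hK.retraction x = 0 :=
    hK.1.projection_eq_zero (hK.isSubcoalgebra_CKsub hC.1) (hC.disjoint_of_not_le hK hCK).symm hx
  rw [LinearMap.mem_ker, indToSelf_indMk, retraction_eq_zero, zero_smul]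

theorem indMk_one_indToSelf (hK : IsHopfSubalgebra k H K) (hCK : C ≤ K.toSubmodule)
    {z : Ind k H K M} (hz : z ∈ conjMsub k H K M C) : indMk K M 1 (indToSelf M hK z) = z := by
  suffices conjMsub k H K M C ≤ LinearMap.eqLocus (indMk K M 1 ∘ₗ indToSelf M hK) .id from this hz
  rw [conjMsub_eq_map₂, Submodule.map₂_le]
  intro x hx m _
  lift x to K using isRightStable_toSubmodule.CKsub_le hCK hx
  rw [LinearMap.mem_eqLocus, LinearMap.comp_apply, indToSelf_indMk, hK.retraction_coe,
    ← indMk_mul, one_mul, LinearMap.id_apply]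

end Retraction

section DirectSum

open DirectSum

variable {k : Type} [Field k] {H : Type} [Ring H] [HopfAlgebra k H] {K : Subalgebra k H}
  {M : Type*} [AddCommGroup M] [Module k M] [Module K M]
  {ι : Type} [DecidableEq ι] {rep : ι → Submodule k H}

variable (K M rep) in
/-- The map `x ⊗ m ↦ x ⊗ m` from the direct sum of a family of conjugate modules to the induced
module. -/
noncomputable def directSumToInd : (⨁ i, ConjM k H K M (rep i)) →ₗ[k] Ind k H K M :=
  DirectSum.toModule k ι _ fun i => conjToInd K M (rep i)

theorem directSumToInd_of (i : ι) (w : ConjM k H K M (rep i)) :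
    directSumToInd K M rep (DirectSum.of (fun i => ConjM k H K M (rep i)) i w) =
      conjToInd K M (rep i) w :=
  DirectSum.toModule_lof (M := fun i => ConjM k H K M (rep i)) k i w

variable [CharZero k] [IsAlgClosed k] [FiniteDimensional k H] [IsSemisimpleRing H]

theorem surjective_directSumToInd (hrep : IsDoubleCosetReps k H ⊥ K rep) :
    Function.Surjective (directSumToInd K M rep) := by
  rw [← LinearMap.range_eq_top, eq_top_iff, ← map₂_indMk_top, ← hrep.iSup_CKsub,
    Submodule.map₂_iSup_left]
  refine iSup_le fun i => Submodule.map₂_le.mpr fun x hx m _ => ?_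
  exact ⟨_, directSumToInd_of i (conjMk K M (rep i) ⟨x, hx⟩ m)⟩

theorem indToConj_directSumToInd (hrep : IsDoubleCosetReps k H ⊥ K rep)
    (hK : IsHopfSubalgebra k H K) (i : ι) (w : ⨁ i, ConjM k H K M (rep i)) :
    indToConj M hK (hrep.1 i).1 (directSumToInd K M rep w) = w i := by
  suffices indToConj M hK (hrep.1 i).1 ∘ₗ directSumToInd K M rep =
      DirectSum.component k ι (fun i => ConjM k H K M (rep i)) i from LinearMap.congr_fun this w
  refine DirectSum.linearMap_ext k fun j => LinearMap.ext fun v => ?_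
  rw [LinearMap.comp_apply, LinearMap.comp_apply, LinearMap.comp_apply, DirectSum.lof_eq_of,
    directSumToInd_of]
  obtain rfl | hij := eq_or_ne i j
  · rw [indToConj_conjToInd, ← DirectSum.lof_eq_of k, DirectSum.component.lof_self]
  · rw [indToConj_conjToInd_of_disjoint hK _ (hrep.1 j).1 (hrep.disjoint_CKsub hK hij),
      ← DirectSum.lof_eq_of k, DirectSum.component.of, dif_neg hij.symm]

theorem bijective_directSumToInd (hrep : IsDoubleCosetReps k H ⊥ K rep)
    (hK : IsHopfSubalgebra k H K) : Function.Bijective (directSumToInd K M rep) := by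
  refine ⟨fun v w hvw => DFinsupp.ext fun i => ?_, surjective_directSumToInd hrep⟩
  exact (indToConj_directSumToInd hrep hK i v).symm.trans
    (hvw ▸ indToConj_directSumToInd hrep hK i w)

variable [IsScalarTower k K M]

theorem indMk_one_indToSelf_of_forall_indToConj_eq_zero (hK : IsHopfSubalgebra k H K)
    {z : Ind k H K M} (hz : ∀ C, ∀ hC : IsSimpleSubcoalgebra k H C, ¬ C ≤ K.toSubmodule →
      indToConj M hK hC.1 z = 0) : indMk K M 1 (indToSelf M hK z) = z := by
  classical
  obtain ⟨ι, rep, hrep⟩ := exists_isDoubleCosetReps_bot K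
  obtain ⟨w, rfl⟩ := surjective_directSumToInd (M := M) hrep z
  suffices ∀ i, indMk K M 1 (indToSelf M hK (conjToInd K M (rep i) (w i))) =
      conjToInd K M (rep i) (w i) by
    rw [← DirectSum.sum_support_of w]
    simp only [map_sum, directSumToInd_of, this]
  intro i
  by_cases hi : rep i ≤ K.toSubmodule
  · exact indMk_one_indToSelf hK hi (conjToInd_mem (w i))
  · rw [← indToConj_directSumToInd hrep hK, hz _ (hrep.1 i) hi, map_zero, map_zero, map_zero]

end DirectSum

section SimpleModule

theorem exists_eq_smul_of_isSimpleModule (k : Type*) [Field k] [IsAlgClosed k] {A V : Type*}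
    [Ring A] [Algebra k A] [Module.Finite k A] [AddCommGroup V] [Module k V] [Module A V]
    [IsScalarTower k A V] [IsSimpleModule A V] (f : Module.End A V) :
    ∃ c : k, ∀ v, f v = c • v := by
  have : Module.Finite k V := .trans A V
  obtain ⟨c, rfl⟩ := (IsSimpleModule.algebraMap_end_bijective_of_isAlgClosed k).2 f
  exact ⟨c, fun v => Module.algebraMap_end_apply k A V c v⟩

theorem isSimpleModule_of_forall_isIdempotentElem {A V : Type*} [Ring A] [AddCommGroup V]
    [Module A V] [IsSemisimpleModule A V] [Nontrivial V]
    (h : ∀ P : Module.End A V, IsIdempotentElem P → P = 0 ∨ P = 1) : IsSimpleModule A V := by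
  rw [isSimpleModule_iff]
  refine { exists_pair_ne := ⟨⊥, ⊤, bot_ne_top⟩, eq_bot_or_eq_top := fun N => ?_ }
  obtain ⟨N', hN⟩ := exists_isCompl N
  rw [← N.range_projection hN]
  refine (h _ (N.isIdempotentElem_projection hN)).imp (fun hP => ?_) fun hP => ?_
  · rw [hP, LinearMap.range_zero]
  · rw [hP, Module.End.one_eq_id, LinearMap.range_id]

end SimpleModule

section Irreducibility

variable {k : Type} [Field k] [CharZero k] [IsAlgClosed k] {H : Type} [Ring H] [HopfAlgebra k H]
  [FiniteDimensional k H] [IsSemisimpleRing H] {K : Subalgebra k H}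
  {M : Type*} [AddCommGroup M] [Module k M] [Module K M] [IsScalarTower k K M]

theorem indToSelf_mem_of_mem_span (hK : IsHopfSubalgebra k H K) {N : Submodule K M}
    {z : Ind k H K M} (hz : z ∈ Submodule.span H (indMk K M 1 '' N)) : indToSelf M hK z ∈ N := by
  induction hz using Submodule.closure_induction with
  | zero => rw [map_zero]; exact zero_mem N
  | add z w _ _ hz hw => rw [map_add]; exact add_mem hz hw
  | smul_mem h z hz =>
    obtain ⟨n, hn, rfl⟩ := hz
    rw [smul_indMk_one, indToSelf_indMk]
    exact N.smul_mem _ hn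

theorem isSimpleModule_of_isSimpleModule_ind (hK : IsHopfSubalgebra k H K)
    [IsSimpleModule H (Ind k H K M)] : IsSimpleModule K M := by
  have := IsSimpleModule.nontrivial H (Ind k H K M)
  have := nontrivial_of_nontrivial_ind (K := K) (M := M)
  rw [isSimpleModule_iff]
  refine { exists_pair_ne := ⟨⊥, ⊤, bot_ne_top⟩, eq_bot_or_eq_top := fun N => ?_ }
  refine (eq_bot_or_eq_top (Submodule.span H (indMk K M 1 '' N))).imp (fun hN => ?_) fun hN => ?_
  · refine (Submodule.eq_bot_iff N).mpr fun n hn => ?_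
    rw [← indToSelf_indMk_one hK n, Submodule.span_eq_bot.mp hN _ ⟨n, hn, rfl⟩, map_zero]
  · refine Submodule.eq_top_iff'.mpr fun m => ?_
    rw [← indToSelf_indMk_one hK m]
    exact indToSelf_mem_of_mem_span hK (hN ▸ Submodule.mem_top)

theorem eq_zero_of_isSimpleModule_ind (hK : IsHopfSubalgebra k H K)
    [IsSimpleModule H (Ind k H K M)] {C : Submodule k H} (hC : IsSimpleSubcoalgebra k H C)
    (hCK : ¬ C ≤ K.toSubmodule) {f : M →ₗ[k] Ind k H K M}
    (hf : ∀ (a : K) m, f (a • m) = (a : H) • f m)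
    (hfC : LinearMap.range f ≤ conjMsub k H K M C) : f = 0 := by
  obtain ⟨c, hc⟩ := exists_eq_smul_of_isSimpleModule k (Ind.extend f hf)
  have f_eq (m : M) : f m = indMk K M 1 (c • m) := by
    rw [map_smul, ← hc, Ind.extend_indMk, one_smul]
  ext m
  have smul_eq_zero : c • m = 0 := by
    rw [← indToSelf_indMk_one hK (c • m), ← f_eq]
    exact indToSelf_eq_zero hK hC hCK (hfC ⟨m, rfl⟩)
  rw [f_eq, smul_eq_zero, map_zero, LinearMap.zero_apply]

theorem indMk_one_indToSelf_of_forall_eq_zero (hK : IsNormalHopfSubalgebra k H K)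
    (hM : ∀ C : Submodule k H, IsSimpleSubcoalgebra k H C → ¬ C ≤ K.toSubmodule →
      ∀ f : M →ₗ[k] Ind k H K M, (∀ (a : K) m, f (a • m) = (a : H) • f m) →
        LinearMap.range f ≤ conjMsub k H K M C → f = 0)
    {f : M →ₗ[k] Ind k H K M} (hf : ∀ (a : K) m, f (a • m) = (a : H) • f m) (m : M) :
    indMk K M 1 (indToSelf M hK.1 (f m)) = f m := by
  refine indMk_one_indToSelf_of_forall_indToConj_eq_zero hK.1 fun C hC hCK => ?_
  have conjToInd_comp_eq_zero : conjToInd K M C ∘ₗ indToConj M hK.1 hC.1 ∘ₗ f = 0 := by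
    refine hM C hC hCK _ (fun a m => ?_) ?_
    · rw [LinearMap.comp_apply, LinearMap.comp_apply, hf]
      exact conjToInd_indToConj_smul hK hC.1 a (f m)
    · rintro _ ⟨m, rfl⟩
      exact conjToInd_mem _
  rw [← indToConj_conjToInd hK.1 hC.1 (indToConj M hK.1 hC.1 (f m))]
  exact (congrArg _ (LinearMap.congr_fun conjToInd_comp_eq_zero m)).trans (map_zero _)

theorem isSimpleModule_ind (hK : IsNormalHopfSubalgebra k H K) [IsSimpleModule K M]
    (hM : ∀ C : Submodule k H, IsSimpleSubcoalgebra k H C → ¬ C ≤ K.toSubmodule →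
      ∀ f : M →ₗ[k] Ind k H K M, (∀ (a : K) m, f (a • m) = (a : H) • f m) →
        LinearMap.range f ≤ conjMsub k H K M C → f = 0) :
    IsSimpleModule H (Ind k H K M) := by
  have := IsSimpleModule.nontrivial K M
  have : Nontrivial (Ind k H K M) :=
    Function.Surjective.nontrivial (f := indToSelf M hK.1) fun m => ⟨_, indToSelf_indMk_one hK.1 m⟩
  refine isSimpleModule_of_forall_isIdempotentElem fun P hP => ?_
  have equivariant (a : K) (m : M) : P (indMk K M 1 (a • m)) = (a : H) • P (indMk K M 1 m) := by
    rw [indMk_one_smul, map_smul]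
  let g : Module.End K M :=
    { indToSelf M hK.1 ∘ₗ P.restrictScalars k ∘ₗ indMk K M 1 with
      map_smul' a m := (congrArg _ (equivariant a m)).trans (indToSelf_smul hK a _) }
  have indMk_one_g (m : M) : indMk K M 1 (g m) = P (indMk K M 1 m) :=
    indMk_one_indToSelf_of_forall_eq_zero hK hM (f := P.restrictScalars k ∘ₗ indMk K M 1)
      equivariant m
  have idempotent_g : IsIdempotentElem g := LinearMap.ext fun m => by
    change indToSelf M hK.1 (P (indMk K M 1 (g m))) = indToSelf M hK.1 (P (indMk K M 1 m))
    rw [indMk_one_g]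
    exact congrArg _ (LinearMap.congr_fun hP _)
  classical
  refine (IsIdempotentElem.iff_eq_zero_or_one.mp idempotent_g).imp (fun hg => ?_) fun hg => ?_
  · refine Ind.hom_ext_one (k := k) fun m => ?_
    rw [← indMk_one_g, hg, LinearMap.zero_apply, map_zero, LinearMap.zero_apply]
  · refine Ind.hom_ext_one (k := k) fun m => ?_
    rw [← indMk_one_g, hg, Module.End.one_apply, Module.End.one_apply]

end Irreducibility

noncomputable section

universe v

variable (k : Type) [Field k] [CharZero k] [IsAlgClosed k]
variable (H : Type) [Ring H] [HopfAlgebra k H]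

open DirectSum

section Statements

variable [FiniteDimensional k H] [IsSemisimpleRing H]

theorem statement_18_general (K : Subalgebra k H) (hK : IsHopfSubalgebra k H K)
    (M : Type v) [AddCommGroup M] [Module k M] [Module ↥K M] [IsScalarTower k ↥K M] :
    (∀ (ι : Type) [DecidableEq ι] (rep : ι → Submodule k H),
      IsDoubleCosetReps k H ⊥ K rep →
      ∃ φ : (⨁ i : ι, ConjM k H K M (rep i)) →ₗ[k] Ind k H K M,
        Function.Bijective φ ∧
        (∀ (i : ι) (x : ↥(CKsub k H K (rep i))) (m : M),
          φ (DirectSum.of (fun i => ConjM k H K M (rep i)) i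
              (Submodule.Quotient.mk (ckmk k H K M (rep i) x m))) =
            Submodule.Quotient.mk ((x : H) ⊗ₜ[k] m)) ∧
        (∀ (a : ↥K) (i : ι) (x : ↥(CKsub k H K (rep i))) (m : M)
          (hax : (a : H) * (x : H) ∈ CKsub k H K (rep i)),
          φ (DirectSum.of (fun i => ConjM k H K M (rep i)) i
              (Submodule.Quotient.mk (ckmk k H K M (rep i) ⟨(a : H) * (x : H), hax⟩ m))) =
            (a : H) • φ (DirectSum.of (fun i => ConjM k H K M (rep i)) i
              (Submodule.Quotient.mk (ckmk k H K M (rep i) x m))))) ∧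
    (IsNormalHopfSubalgebra k H K →
      (IsSimpleModule H (Ind k H K M) ↔
        (IsSimpleModule ↥K M ∧
          ∀ C : Submodule k H, IsSimpleSubcoalgebra k H C → ¬ C ≤ K.toSubmodule →
            ¬ ∃ f : M →ₗ[k] Ind k H K M, f ≠ 0 ∧
              (∀ (a : ↥K) (m : M), f (a • m) = (a : H) • f m) ∧
              LinearMap.range f ≤ conjMsub k H K M C))) := by
  refine ⟨fun ι _ rep hrep => ?_, fun hn => ⟨fun hS => ?_, fun ⟨_, hno⟩ => ?_⟩⟩
  · refine ⟨directSumToInd K M rep, bijective_directSumToInd hrep hK, ?_, ?_⟩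
    · exact fun i x m => directSumToInd_of i (conjMk K M (rep i) x m)
    · intro a i x m hax
      have ind_eq := directSumToInd_of i (conjMk K M (rep i) x m)
      have ind_mul_eq := directSumToInd_of i (conjMk K M (rep i) ⟨_, hax⟩ m)
      exact ind_mul_eq.trans (congrArg (fun z => (a : H) • z) ind_eq.symm)
  · refine ⟨isSimpleModule_of_isSimpleModule_ind hK, ?_⟩
    rintro C hC hCK ⟨f, hf0, hf, hfC⟩
    exact hf0 (eq_zero_of_isSimpleModule_ind hK hC hCK hf hfC)
  · refine isSimpleModule_ind hn fun C hC hCK f hf hfC => ?_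
    by_contra hf0
    exact hno C hC hCK ⟨f, hf0, hf, hfC⟩

/-- Proposition 70: let `K` be a normal Hopf subalgebra of `H`
and `M` a finite-dimensional `K`-module.
(1) `M↑_K^H↓_K^H ≅ ⊕_{C ∈ H/K} ᶜM` as `K`-modules, the sum running over
representatives of the right cosets of `K` in `H`; concretely, for any system
of right-coset representatives there is a `k`-linear bijection
`⊕_C ᶜM → M↑_K^H`, `x ⊗ m ↦ x ⊗ m`, which is `K`-equivariant (for the left
multiplication actions of `K` on both sides).
(2) `M↑_K^H` is irreducible if and only if `M` is an irreducible `K`-module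
which is not a direct summand of (i.e., admits no nonzero `K`-homomorphism
into) any conjugate module `ᶜM` with `C` a simple subcoalgebra of `H` not
contained in `K`. -/
theorem statement_18 (K : Subalgebra k H) (hK : IsNormalHopfSubalgebra k H K)
    (M : Type v) [AddCommGroup M] [Module k M] [Module ↥K M]
    [IsScalarTower k ↥K M] [Module.Finite k M] :
    (∀ (ι : Type) [DecidableEq ι] (rep : ι → Submodule k H),
      IsDoubleCosetReps k H ⊥ K rep →
      ∃ φ : (⨁ i : ι, ConjM k H K M (rep i)) →ₗ[k] Ind k H K M,
        Function.Bijective φ ∧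
        (∀ (i : ι) (x : ↥(CKsub k H K (rep i))) (m : M),
          φ (DirectSum.of (fun i => ConjM k H K M (rep i)) i
              (Submodule.Quotient.mk (ckmk k H K M (rep i) x m))) =
            Submodule.Quotient.mk ((x : H) ⊗ₜ[k] m)) ∧
        (∀ (a : ↥K) (i : ι) (x : ↥(CKsub k H K (rep i))) (m : M)
          (hax : (a : H) * (x : H) ∈ CKsub k H K (rep i)),
          φ (DirectSum.of (fun i => ConjM k H K M (rep i)) i
              (Submodule.Quotient.mk (ckmk k H K M (rep i) ⟨(a : H) * (x : H), hax⟩ m))) =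
            (a : H) • φ (DirectSum.of (fun i => ConjM k H K M (rep i)) i
              (Submodule.Quotient.mk (ckmk k H K M (rep i) x m))))) ∧
    (IsSimpleModule H (Ind k H K M) ↔
      (IsSimpleModule ↥K M ∧
        ∀ C : Submodule k H, IsSimpleSubcoalgebra k H C → ¬ C ≤ K.toSubmodule →
          ¬ ∃ f : M →ₗ[k] Ind k H K M, f ≠ 0 ∧
            (∀ (a : ↥K) (m : M), f (a • m) = (a : H) • f m) ∧
            LinearMap.range f ≤ conjMsub k H K M C)) :=
  have ⟨decomposition, irreducibility⟩ := statement_18_general k H K hK.1 M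
  ⟨decomposition, irreducibility hK⟩

end Statements

end

end MackeyPaper
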